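/- Fix ρ ∈ [0,1]^K with Σ_k ρ_k = 1, and a sequence αₙ ∈ (0,1) with lim_n n·αₙ = ∞ and lim_n n·αₙ² = 0. Then for every μ ∈ (0,1) there exists a sequence of (n, M₁,…,M_K, L₁,…,L_K) codes such that: (i) lim_n P_eⁿ = 0; (ii) lim_n D(Q̂ⁿ‖Q_∅^{⊗n}) = 0; (iii) for every k, lim_n (log M_k)/√(n·D(Q̂ⁿ‖Q_∅^{⊗n})) = (1−μ)·√(2/χ(ρ))·ρ_k·D(P_k‖P_∅); and (iv) for every k, lim_n (log L_k)/√(n·D(Q̂ⁿ‖Q_∅^{⊗n})) = √(2/χ(ρ))·ρ_k·max{(1+μ)D(Q_k‖Q_∅) − (1−μ)D(P_k‖P_∅), 0}. Here χ(ρ) := Σ_z (Σ_k ρ_k(Q_k(z) − Q_∅(z)))² / Q_∅(z). -/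

import Mathlib

open Finset Filter
open scoped Topology Classical

noncomputable section

/-- `P` is a probability distribution on the finite type `Z`. -/
def IsDist {Z : Type*} [Fintype Z] (P : Z → ℝ) : Prop :=
  (∀ z, 0 ≤ P z) ∧ ∑ z, P z = 1

/-- Kullback–Leibler divergence `D(P‖Q)` (natural logarithm). -/
def klDiv {Z : Type*} [Fintype Z] (P Q : Z → ℝ) : ℝ :=
  ∑ z, P z * Real.log (P z / Q z)

/-- `P` is absolutely continuous w.r.t. `Q`. -/
def AbsCont {Z : Type*} (P Q : Z → ℝ) : Prop :=
  ∀ z, Q z = 0 → P z = 0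

/-- The binary input vector having ones exactly at the indices in `U`. -/
def xU {K : ℕ} (U : Finset (Fin K)) : Fin K → Bool :=
  fun k => decide (k ∈ U)

/-- Bernoulli distribution on `Bool` with success probability `p`. -/
def bern (p : ℝ) : Bool → ℝ := fun b => if b then p else 1 - p

/-- `n`-fold memoryless extension of a channel `W`. -/
def prodChannel {A Z : Type*} (W : A → Z → ℝ) (n : ℕ)
    (x : Fin n → A) (z : Fin n → Z) : ℝ :=
  ∏ j, W (x j) (z j)

/-- `χ(ρ) := Σ_z (Σ_k ρ_k (Q_k(z) - Q_∅(z)))² / Q_∅(z)` for the warden channel `Wz`. -/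
def chiRho {K : ℕ} {Z : Type*} [Fintype Z] (Wz : (Fin K → Bool) → Z → ℝ)
    (ρ : Fin K → ℝ) : ℝ :=
  ∑ z, (∑ k, ρ k * (Wz (xU {k}) z - Wz (xU ∅) z)) ^ 2 / Wz (xU ∅) z

/-- The distribution `Q̂ⁿ` induced at the warden by a code with encoders `enc`, uniform
messages and uniform keys. -/
def Qhat {K n : ℕ} {Z : Type*} [Fintype Z] (Wz : (Fin K → Bool) → Z → ℝ)
    (M L : Fin K → ℕ) (enc : ∀ k, Fin (M k) × Fin (L k) → Fin n → Bool)
    (z : Fin n → Z) : ℝ :=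
  (∏ k, ((M k : ℝ) * (L k : ℝ)))⁻¹ *
    ∑ m : ∀ k, Fin (M k), ∑ l : ∀ k, Fin (L k),
      prodChannel Wz n (fun j k => enc k (m k, l k) j) z

/-- The average probability of decoding error of a code over the `n`-fold extension of
the channel `Wy`, with uniform messages and uniform keys. -/
def Pe {K n : ℕ} {Y : Type*} [Fintype Y] (Wy : (Fin K → Bool) → Y → ℝ)
    (M L : Fin K → ℕ) (enc : ∀ k, Fin (M k) × Fin (L k) → Fin n → Bool)
    (dec : (Fin n → Y) → (∀ k, Fin (L k)) → ∀ k, Fin (M k)) : ℝ :=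
  (∏ k, ((M k : ℝ) * (L k : ℝ)))⁻¹ *
    ∑ m : ∀ k, Fin (M k), ∑ l : ∀ k, Fin (L k), ∑ y : Fin n → Y,
      prodChannel Wy n (fun j k => enc k (m k, l k) j) y *
        (if dec y l = m then 0 else 1)

/-- `δₙ = D(Q̂ⁿ ‖ Q_∅^{⊗n})`. -/
def deltaN {K n : ℕ} {Z : Type*} [Fintype Z] (Wz : (Fin K → Bool) → Z → ℝ)
    (M L : Fin K → ℕ) (enc : ∀ k, Fin (M k) × Fin (L k) → Fin n → Bool) : ℝ :=
  klDiv (Qhat Wz M L enc) (fun z : Fin n → Z => ∏ j, Wz (xU ∅) (z j))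

/-!
Random coding with sparse inputs: user `k` draws its codeword symbols i.i.d. Bernoulli with
parameter `ρ k * t`, where `t = n ^ (-3/4)`. The message of each user is decoded separately, by a
threshold test on the likelihood ratio between the output laws of `x_{k}` and `x_∅`. A Rényi-type
moment bound, averaged over the codebook, controls the divergence of `Q̂ⁿ` from the i.i.d. law
`q_t^{⊗n}` that uncoded inputs induce. All the moments involved equal `1` at `t = 0`, and their
derivatives there show that decoding succeeds when the message rates, in nats per unit of `n t`, are
below `ρ k * D(P_k‖P_∅)`, and that `n⁴ D(Q̂ⁿ‖q_t^{⊗n})` vanishes when the sums of message and key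
rates are above `ρ k * D(Q_k‖Q_∅)`. The second-order expansion `D(q_t‖Q_∅) ~ t² χ(ρ) / 2` then
carries over to `D(Q̂ⁿ‖Q_∅^{⊗n}) ~ n t² χ(ρ) / 2`, so that `n t` is `√(2 / χ(ρ))` times the
normalization `√(n D(Q̂ⁿ‖Q_∅^{⊗n}))` of the throughputs.
-/

lemma IsDist.nonneg {Ω : Type*} [Fintype Ω] {P : Ω → ℝ} (hP : IsDist P) (ω : Ω) : 0 ≤ P ω :=
  hP.1 ω

lemma IsDist.sum_eq_one {Ω : Type*} [Fintype Ω] {P : Ω → ℝ} (hP : IsDist P) : ∑ ω, P ω = 1 :=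
  hP.2

lemma IsDist.sum_mul_const {Ω : Type*} [Fintype Ω] {P : Ω → ℝ} (hP : IsDist P) (a : ℝ) :
    ∑ ω, P ω * a = a := by
  rw [← sum_mul, hP.sum_eq_one, one_mul]

lemma IsDist.exists_le_sum {Ω : Type*} [Fintype Ω] {P : Ω → ℝ} (hP : IsDist P) (f : Ω → ℝ) :
    ∃ ω, f ω ≤ ∑ ω', P ω' * f ω' := by
  by_contra! h
  obtain ⟨ω, -, hω⟩ : ∃ ω ∈ univ, P ω ≠ 0 :=
    exists_ne_zero_of_sum_ne_zero (hP.sum_eq_one.trans_ne one_ne_zero)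
  refine (hP.sum_mul_const (∑ ω', P ω' * f ω')).not_lt
    (sum_lt_sum (fun i _ ↦ mul_le_mul_of_nonneg_left (h i).le (hP.nonneg i))
      ⟨ω, mem_univ ω, mul_lt_mul_of_pos_left (h ω) ((hP.nonneg ω).lt_of_ne' hω)⟩)

lemma IsDist.mix {Ω Z : Type*} [Fintype Ω] [Fintype Z] {P : Ω → ℝ} {W : Ω → Z → ℝ}
    (hP : IsDist P) (hW : ∀ ω, IsDist (W ω)) : IsDist fun z ↦ ∑ ω, P ω * W ω z := by
  refine ⟨fun z ↦ sum_nonneg fun ω _ ↦ mul_nonneg (hP.nonneg ω) ((hW ω).nonneg z), ?_⟩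
  rw [sum_comm]
  simp only [← mul_sum, (hW _).sum_eq_one, mul_one, hP.sum_eq_one]

lemma IsDist.rpow_jensen {Ω : Type*} [Fintype Ω] {P : Ω → ℝ} (hP : IsDist P) {f : Ω → ℝ}
    (hf : ∀ ω, 0 ≤ f ω) {s : ℝ} (hs0 : 0 ≤ s) (hs1 : s ≤ 1) :
    ∑ ω, P ω * f ω ^ s ≤ (∑ ω, P ω * f ω) ^ s :=
  (Real.concaveOn_rpow hs0 hs1).le_map_sum (fun ω _ ↦ hP.nonneg ω) hP.sum_eq_one fun ω _ ↦ hf ω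

section ProductLaw

variable {ι : Type*} [Fintype ι] {X : ι → Type*}

/-- The law of a family of independent coordinates, the `i`-th one with law `p i`. -/
def prodLaw (p : ∀ i, X i → ℝ) (x : ∀ i, X i) : ℝ :=
  ∏ i, p i (x i)

variable [DecidableEq ι] [∀ i, Fintype (X i)] {p : ∀ i, X i → ℝ}

lemma isDist_prodLaw (hp : ∀ i, IsDist (p i)) : IsDist (prodLaw p) := by
  refine ⟨fun x ↦ prod_nonneg fun i _ ↦ (hp i).nonneg (x i), ?_⟩
  simp only [prodLaw, ← Fintype.prod_sum, (hp _).sum_eq_one, prod_const_one]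

lemma sum_prodLaw_mul_apply (hp : ∀ i, IsDist (p i)) (i : ι) (f : X i → ℝ) :
    ∑ x, prodLaw p x * f (x i) = ∑ v, p i v * f v := by
  have hfactor (x : ∀ j, X j) : prodLaw p x * f (x i) =
      ∏ j, Function.update p i (fun v ↦ p i v * f v) j (x j) := by
    rw [prodLaw, ← mul_prod_erase univ _ (mem_univ i), ← mul_prod_erase univ _ (mem_univ i),
      Function.update_self, mul_right_comm]
    congr 1
    exact prod_congr rfl fun j hj ↦ by rw [Function.update_of_ne (ne_of_mem_erase hj)]
  simp only [hfactor, ← Fintype.prod_sum]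
  rw [← mul_prod_erase univ _ (mem_univ i), Function.update_self, prod_eq_one, mul_one]
  intro j hj
  rw [Function.update_of_ne (ne_of_mem_erase hj), (hp j).sum_eq_one]

end ProductLaw

section Codebook

variable {ι X : Type*} {I : ι → Type*} [Fintype ι] [∀ k, Fintype (I k)]

/-- The law of a random codebook: user `k` has one codeword for each index in `I k`, and all
codewords are drawn independently, those of user `k` from `p k`. -/
def codebookLaw (p : ι → X → ℝ) : (∀ k, I k → X) → ℝ :=
  prodLaw fun k ↦ prodLaw fun _ : I k ↦ p k

variable [DecidableEq ι] [Fintype X] [∀ k, DecidableEq (I k)] {p : ι → X → ℝ}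

lemma isDist_codebookLaw (hp : ∀ k, IsDist (p k)) :
    IsDist (codebookLaw p : (∀ k, I k → X) → ℝ) :=
  isDist_prodLaw fun k ↦ isDist_prodLaw fun _ ↦ hp k

-- The exchange of the selected codewords with the fresh ones preserves the joint law.
lemma sum_codebookLaw_resample (hp : ∀ k, IsDist (p k)) (i : ∀ k, I k)
    (F : (∀ k, I k → X) → ℝ) :
    ∑ c, codebookLaw p c * F c = ∑ c, codebookLaw p c *
      ∑ x, prodLaw p x * F (fun k ↦ Function.update (c k) (i k) (x k)) := by
  let exchange (q : (∀ k, I k → X) × (ι → X)) : (∀ k, I k → X) × (ι → X) :=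
    (fun k ↦ Function.update (q.1 k) (i k) (q.2 k), fun k ↦ q.1 k (i k))
  have hinv : Function.Involutive exchange := fun q ↦ by simp [exchange]
  have hweight (q) : codebookLaw p (exchange q).1 * prodLaw p (exchange q).2 =
      codebookLaw p q.1 * prodLaw p q.2 := by
    simp only [codebookLaw, prodLaw, ← prod_mul_distrib]
    refine prod_congr rfl fun k _ ↦ ?_
    rw [← mul_prod_erase univ _ (mem_univ (i k)), ← mul_prod_erase univ _ (mem_univ (i k))]
    have hrest : ∏ j ∈ univ.erase (i k), p k ((exchange q).1 k j) =
        ∏ j ∈ univ.erase (i k), p k (q.1 k j) :=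
      prod_congr rfl fun j hj ↦ by simp [exchange, Function.update_of_ne (ne_of_mem_erase hj)]
    rw [hrest]
    simp only [exchange, Function.update_self]
    ring
  calc ∑ c, codebookLaw p c * F c
      = ∑ q : (∀ k, I k → X) × (ι → X), codebookLaw p q.1 * prodLaw p q.2 * F q.1 := by
        rw [Fintype.sum_prod_type]
        refine sum_congr rfl fun c _ ↦ ?_
        rw [← (isDist_prodLaw hp).sum_mul_const (codebookLaw p c * F c)]
        exact sum_congr rfl fun x _ ↦ by ring
    _ = ∑ q : (∀ k, I k → X) × (ι → X),
          codebookLaw p q.1 * prodLaw p q.2 * F (exchange q).1 := by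
        rw [← Equiv.sum_comp (hinv.toPerm exchange)]
        exact sum_congr rfl fun q _ ↦ by rw [Function.Involutive.coe_toPerm, hweight]
    _ = _ := by
        rw [Fintype.sum_prod_type]
        simp only [mul_sum, mul_assoc, exchange]

lemma sum_codebookLaw_mul_select (hp : ∀ k, IsDist (p k)) (i : ∀ k, I k) (g : (ι → X) → ℝ) :
    ∑ c, codebookLaw p c * g (fun k ↦ c k (i k)) = ∑ x, prodLaw p x * g x := by
  rw [sum_codebookLaw_resample hp i]
  simp only [Function.update_self]
  exact (isDist_codebookLaw hp).sum_mul_const _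

lemma sum_codebookLaw_mul_select_pair (hp : ∀ k, IsDist (p k)) (i : ∀ k, I k) {k : ι} {b : I k}
    (hb : b ≠ i k) (g : (ι → X) → X → ℝ) :
    ∑ c, codebookLaw p c * g (fun k' ↦ c k' (i k')) (c k b) =
      ∑ x, prodLaw p x * ∑ v, p k v * g x v := by
  have hmarginal := sum_codebookLaw_mul_select hp (Function.update i k b)
    (fun x' ↦ ∑ x, prodLaw p x * g x (x' k))
  rw [sum_prodLaw_mul_apply hp k fun v ↦ ∑ x, prodLaw p x * g x v] at hmarginal
  rw [sum_codebookLaw_resample hp i]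
  simp only [Function.update_self, Function.update_of_ne hb] at hmarginal ⊢
  rw [hmarginal]
  simp only [mul_sum]
  rw [sum_comm]
  exact sum_congr rfl fun x _ ↦ sum_congr rfl fun v _ ↦ by ring

end Codebook

lemma absCont_prodLaw {ι Z : Type*} [Fintype ι] {P Q : ι → Z → ℝ}
    (h : ∀ i, AbsCont (P i) (Q i)) : AbsCont (prodLaw P) (prodLaw Q) := fun z hz ↦ by
  obtain ⟨i, -, hi⟩ := prod_eq_zero_iff.mp hz
  exact prod_eq_zero (mem_univ i) (h i _ hi)

section Divergence

variable {Z : Type*} [Fintype Z] {P Q : Z → ℝ}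

lemma klDiv_eq_sum_klFun (hP : IsDist P) (hQ : IsDist Q) (hPQ : AbsCont P Q) :
    klDiv P Q = ∑ z, Q z * InformationTheory.klFun (P z / Q z) := by
  have hterm (z : Z) :
      Q z * InformationTheory.klFun (P z / Q z) = P z * Real.log (P z / Q z) + (Q z - P z) := by
    rcases eq_or_ne (Q z) 0 with hz | hz
    · simp [hz, hPQ z hz]
    · rw [InformationTheory.klFun_apply]
      field_simp
      ring
  simp only [hterm, sum_add_distrib, sum_sub_distrib, hP.sum_eq_one, hQ.sum_eq_one, sub_self,
    add_zero, klDiv]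

lemma klDiv_nonneg (hP : IsDist P) (hQ : IsDist Q) (hPQ : AbsCont P Q) : 0 ≤ klDiv P Q := by
  rw [klDiv_eq_sum_klFun hP hQ hPQ]
  exact sum_nonneg fun z _ ↦ mul_nonneg (hQ.nonneg z)
    (InformationTheory.klFun_nonneg (div_nonneg (hP.nonneg z) (hQ.nonneg z)))

lemma klDiv_pos (hP : IsDist P) (hQ : IsDist Q) (hPQ : AbsCont P Q) (hne : P ≠ Q) :
    0 < klDiv P Q := by
  refine (klDiv_nonneg hP hQ hPQ).lt_of_ne' fun hzero ↦ hne (funext fun z ↦ ?_)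
  have hratio (z : Z) : 0 ≤ P z / Q z := div_nonneg (hP.nonneg z) (hQ.nonneg z)
  rw [klDiv_eq_sum_klFun hP hQ hPQ, sum_eq_zero_iff_of_nonneg fun z _ ↦
    mul_nonneg (hQ.nonneg z) (InformationTheory.klFun_nonneg (hratio z))] at hzero
  rcases mul_eq_zero.mp (hzero z (mem_univ z)) with hz | hz
  · rw [hz, hPQ z hz]
  · exact eq_of_div_eq_one ((InformationTheory.klFun_eq_zero_iff (hratio z)).mp hz)

lemma mul_klDiv_le_sum_rpow (hP : IsDist P) (hQ : ∀ z, 0 ≤ Q z) (hPQ : AbsCont P Q) (s : ℝ) :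
    s * klDiv P Q ≤ ∑ z, P z * (P z / Q z) ^ s - 1 := by
  rw [← hP.sum_eq_one, ← sum_sub_distrib, klDiv, mul_sum]
  refine sum_le_sum fun z _ ↦ ?_
  rcases (hP.nonneg z).eq_or_lt' with hz | hz
  · simp [hz]
  have hratio : 0 < P z / Q z := div_pos hz ((hQ z).lt_of_ne' fun h ↦ hz.ne' (hPQ z h))
  have hlog := Real.log_le_sub_one_of_pos (Real.rpow_pos_of_pos hratio s)
  rw [Real.log_rpow hratio] at hlog
  linear_combination P z * hlog

lemma sq_sqrt_sub_one_le_klFun {x : ℝ} (hx : 0 ≤ x) :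
    (√x - 1) ^ 2 ≤ InformationTheory.klFun x := by
  rw [InformationTheory.klFun_apply]
  rcases hx.eq_or_lt with rfl | hx
  · simp
  have hsqrt := Real.sqrt_pos.mpr hx
  have hlog := Real.log_le_sub_one_of_pos (inv_pos.mpr hsqrt)
  rw [Real.log_inv, Real.log_sqrt hx.le] at hlog
  have hmul : x * (√x)⁻¹ = √x := by rw [← div_eq_mul_inv, Real.div_sqrt]
  linear_combination 2 * x * hlog + Real.sq_sqrt hx.le + 2 * hmul

-- Cauchy–Schwarz on `|P - Q| = Q |√(P/Q) - 1| (√(P/Q) + 1)`.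
lemma sum_abs_sub_le_sqrt_klDiv (hP : IsDist P) (hQ : IsDist Q) (hPQ : AbsCont P Q) :
    ∑ z, |P z - Q z| ≤ 2 * √(klDiv P Q) := by
  have hroot (z : Z) : √(Q z) * √(Q z) = Q z := Real.mul_self_sqrt (hQ.nonneg z)
  have hratio (z : Z) : 0 ≤ P z / Q z := div_nonneg (hP.nonneg z) (hQ.nonneg z)
  have hmul (z : Z) : Q z * (P z / Q z) = P z := by
    rcases eq_or_ne (Q z) 0 with hz | hz
    · simp [hz, hPQ z hz]
    · exact mul_div_cancel₀ _ hz
  have hterm (z : Z) : |P z - Q z| =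
      (√(Q z) * |√(P z / Q z) - 1|) * (√(Q z) * (√(P z / Q z) + 1)) := by
    rw [← abs_of_nonneg (by positivity : 0 ≤ √(P z / Q z) + 1), mul_mul_mul_comm, hroot,
      ← abs_mul, ← abs_of_nonneg (hQ.nonneg z), ← abs_mul, abs_of_nonneg (hQ.nonneg z)]
    congr 1
    linear_combination -(hmul z) - Q z * Real.sq_sqrt (hratio z)
  have hleft : ∑ z, (√(Q z) * |√(P z / Q z) - 1|) ^ 2 ≤ klDiv P Q := by
    rw [klDiv_eq_sum_klFun hP hQ hPQ]
    refine sum_le_sum fun z _ ↦ ?_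
    rw [mul_pow, sq_abs, Real.sq_sqrt (hQ.nonneg z)]
    exact mul_le_mul_of_nonneg_left (sq_sqrt_sub_one_le_klFun (hratio z)) (hQ.nonneg z)
  have hright : ∑ z, (√(Q z) * (√(P z / Q z) + 1)) ^ 2 ≤ 2 ^ 2 := by
    calc ∑ z, (√(Q z) * (√(P z / Q z) + 1)) ^ 2
        ≤ ∑ z, (2 * P z + 2 * Q z) := by
          refine sum_le_sum fun z _ ↦ ?_
          have hQz := hQ.nonneg z
          rw [mul_pow, Real.sq_sqrt hQz]
          linear_combination (Q z) * (sq_nonneg (√(P z / Q z) - 1)) +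
            2 * Q z * Real.sq_sqrt (hratio z) + 2 * hmul z
      _ = 2 ^ 2 := by
          rw [sum_add_distrib, ← mul_sum, ← mul_sum, hP.sum_eq_one, hQ.sum_eq_one]
          norm_num
  calc ∑ z, |P z - Q z| ≤ √(∑ z, (√(Q z) * |√(P z / Q z) - 1|) ^ 2) *
        √(∑ z, (√(Q z) * (√(P z / Q z) + 1)) ^ 2) := by
        simp only [hterm]
        exact Real.sum_mul_le_sqrt_mul_sqrt _ _ _
    _ ≤ √(klDiv P Q) * 2 := by
        gcongr
        exact Real.sqrt_le_iff.mpr ⟨zero_le_two, hright⟩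
    _ = _ := mul_comm _ _

lemma abs_sum_mul_sub_sum_mul_le (hP : IsDist P) (hQ : IsDist Q) (hPQ : AbsCont P Q) {B : ℝ}
    {f : Z → ℝ} (hf : ∀ z, |f z| ≤ B) :
    |∑ z, P z * f z - ∑ z, Q z * f z| ≤ B * (2 * √(klDiv P Q)) := by
  have hB : 0 ≤ B := by
    obtain ⟨z, -⟩ := hP.exists_le_sum 0
    exact (abs_nonneg _).trans (hf z)
  calc |∑ z, P z * f z - ∑ z, Q z * f z| = |∑ z, (P z - Q z) * f z| := by
        simp only [sub_mul, sum_sub_distrib]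
    _ ≤ ∑ z, |P z - Q z| * B := (abs_sum_le_sum_abs _ _).trans <| sum_le_sum fun z _ ↦ by
        rw [abs_mul]
        exact mul_le_mul_of_nonneg_left (hf z) (abs_nonneg _)
    _ ≤ B * (2 * √(klDiv P Q)) := by
        rw [← sum_mul, mul_comm]
        exact mul_le_mul_of_nonneg_left (sum_abs_sub_le_sqrt_klDiv hP hQ hPQ) hB

lemma klDiv_eq_klDiv_add_sum_log {R : Z → ℝ} (hPQ : AbsCont P Q) (hQR : AbsCont Q R) :
    klDiv P R = klDiv P Q + ∑ z, P z * Real.log (Q z / R z) := by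
  rw [klDiv, klDiv, ← sum_add_distrib]
  refine sum_congr rfl fun z _ ↦ ?_
  rcases eq_or_ne (P z) 0 with hz | hz
  · simp [hz]
  have hQz : Q z ≠ 0 := fun h ↦ hz (hPQ z h)
  have hRz : R z ≠ 0 := fun h ↦ hQz (hQR z h)
  rw [← mul_add, ← Real.log_mul (div_ne_zero hz hQz) (div_ne_zero hQz hRz), div_mul_div_cancel₀ hQz]

lemma abs_klDiv_iid_sub_le {n : ℕ} {P : (Fin n → Z) → ℝ} {q q₀ : Z → ℝ} (hP : IsDist P)
    (hq : IsDist q) (hPq : AbsCont P (prodLaw fun _ ↦ q)) (hq₀ : AbsCont q q₀) {B : ℝ}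
    (hB : ∀ z, |Real.log (q z / q₀ z)| ≤ B) :
    |klDiv P (prodLaw fun _ ↦ q₀) - klDiv P (prodLaw fun _ ↦ q) - n * klDiv q q₀| ≤
      n * B * (2 * √(klDiv P (prodLaw fun _ ↦ q))) := by
  let logLik (z : Fin n → Z) : ℝ := ∑ j, Real.log (q (z j) / q₀ (z j))
  have hqn : IsDist (prodLaw fun _ : Fin n ↦ q) := isDist_prodLaw fun _ ↦ hq
  have hlogLik (z : Fin n → Z) : |logLik z| ≤ n * B :=
    (abs_sum_le_sum_abs _ _).trans <| (sum_le_sum fun j _ ↦ hB (z j)).trans_eq (by simp)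
  have hlog (z : Fin n → Z) : P z *
      Real.log ((prodLaw fun _ ↦ q) z / (prodLaw fun _ ↦ q₀) z) = P z * logLik z := by
    rcases eq_or_ne (P z) 0 with hz | hz
    · simp [hz]
    have hqz : ∀ j ∈ univ, q (z j) ≠ 0 := prod_ne_zero_iff.mp fun h ↦ hz (hPq z h)
    rw [prodLaw, prodLaw, ← prod_div_distrib, Real.log_prod fun j hj ↦
      div_ne_zero (hqz j hj) fun h ↦ hqz j hj (hq₀ _ h)]
  have hmean : ∑ z, prodLaw (fun _ ↦ q) z * logLik z = n * klDiv q q₀ := by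
    simp only [logLik, mul_sum]
    rw [sum_comm]
    simp only [sum_prodLaw_mul_apply (fun _ ↦ hq) _ fun v ↦ Real.log (q v / q₀ v)]
    simp [klDiv]
  rw [klDiv_eq_klDiv_add_sum_log hPq (absCont_prodLaw fun _ ↦ hq₀), add_sub_cancel_left, ← hmean]
  simp only [hlog]
  exact abs_sum_mul_sub_sum_mul_le hP hqn hPq hlogLik

end Divergence

section Channel

variable {ι X Z : Type*} [Fintype ι] [DecidableEq ι] [Fintype X] {p : ι → X → ℝ}
  {W : (ι → X) → Z → ℝ}

/-- The output law of the channel `W` when the users transmit independent symbols, that of user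
`k` drawn from `p k`. -/
def outputLaw (p : ι → X → ℝ) (W : (ι → X) → Z → ℝ) (z : Z) : ℝ :=
  ∑ x, prodLaw p x * W x z

/-- The channel seen by the users in `T`: the inputs of the other users are averaged out according
to `p`. -/
def averagedChannel (p : ι → X → ℝ) (W : (ι → X) → Z → ℝ) (T : Finset ι) (x : ι → X) : Z → ℝ :=
  outputLaw p fun x' ↦ W (T.piecewise x x')

/-- The moment generating function, at `s`, of the information density between the inputs of the
users in `T` and the output of `W`. -/
def infoMoment [Fintype Z] (p : ι → X → ℝ) (W : (ι → X) → Z → ℝ) (T : Finset ι) (s : ℝ) : ℝ :=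
  ∑ x, prodLaw p x * ∑ z, W x z * (averagedChannel p W T x z / outputLaw p W z) ^ s

lemma isDist_outputLaw [Fintype Z] (hp : ∀ k, IsDist (p k)) (hW : ∀ x, IsDist (W x)) :
    IsDist (outputLaw p W) :=
  (isDist_prodLaw hp).mix hW

lemma outputLaw_nonneg (hp : ∀ k v, 0 ≤ p k v) (hW : ∀ x z, 0 ≤ W x z) (z : Z) :
    0 ≤ outputLaw p W z :=
  sum_nonneg fun x _ ↦ mul_nonneg (prod_nonneg fun k _ ↦ hp k (x k)) (hW x z)

lemma absCont_outputLaw {q : Z → ℝ} (hq : ∀ x, AbsCont (W x) q) : AbsCont (outputLaw p W) q :=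
  fun z hz ↦ sum_eq_zero fun x _ ↦ by rw [hq x z hz, mul_zero]

lemma averagedChannel_nonneg (hp : ∀ k v, 0 ≤ p k v) (hW : ∀ x z, 0 ≤ W x z) (T : Finset ι)
    (x : ι → X) (z : Z) : 0 ≤ averagedChannel p W T x z :=
  outputLaw_nonneg hp (fun _ ↦ hW _) z

lemma infoMoment_nonneg [Fintype Z] (hp : ∀ k v, 0 ≤ p k v) (hW : ∀ x z, 0 ≤ W x z)
    (T : Finset ι) (s : ℝ) : 0 ≤ infoMoment p W T s :=
  sum_nonneg fun x _ ↦ mul_nonneg (prod_nonneg fun k _ ↦ hp k (x k)) <| sum_nonneg fun z _ ↦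
    mul_nonneg (hW x z) <| Real.rpow_nonneg
      (div_nonneg (averagedChannel_nonneg hp hW T x z) (outputLaw_nonneg hp hW z)) s

lemma averagedChannel_empty (x : ι → X) : averagedChannel p W ∅ x = outputLaw p W := by
  simp only [averagedChannel, piecewise_empty]

lemma averagedChannel_inter {A : Finset ι}
    (hA : ∀ k ∉ A, (Function.support (p k)).Subsingleton) {x : ι → X} (hx : prodLaw p x ≠ 0)
    (T : Finset ι) : averagedChannel p W (T ∩ A) x = averagedChannel p W T x := by
  refine funext fun z ↦ sum_congr rfl fun x' _ ↦ ?_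
  rcases eq_or_ne (prodLaw p x') 0 with hx' | hx'
  · simp only [hx', zero_mul]
  have hpiecewise : (T ∩ A).piecewise x x' = T.piecewise x x' := by
    ext k
    by_cases hk : k ∈ A
    · simp only [piecewise, mem_inter, hk, and_true]
    · have hxk : x k = x' k := hA k hk (prod_ne_zero_iff.mp hx k (mem_univ k))
        (prod_ne_zero_iff.mp hx' k (mem_univ k))
      simp only [piecewise, hxk, ite_self]
  simp only [hpiecewise]

end Channel

section Resolvability

lemma rpow_sum_le_sum_rpow {α : Type*} {t : Finset α} {f : α → ℝ} (hf : ∀ a ∈ t, 0 ≤ f a) {s : ℝ}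
    (hs0 : 0 < s) (hs1 : s ≤ 1) : (∑ a ∈ t, f a) ^ s ≤ ∑ a ∈ t, f a ^ s :=
  le_sum_of_subadditive_on_pred (fun r : ℝ ↦ r ^ s) (fun r ↦ 0 ≤ r) (Real.zero_rpow hs0.ne').le
    (fun _ _ ha hb ↦ Real.rpow_add_le_add_rpow ha hb hs0.le hs1) (fun _ _ ↦ add_nonneg) f hf

variable {ι X Z : Type*} {I : ι → Type*} [Fintype ι] [DecidableEq ι] [∀ k, Fintype (I k)]
  {p : ι → X → ℝ} {W : (ι → X) → Z → ℝ}

/-- The output law of `W` when every user transmits a codeword chosen uniformly from its part of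
the codebook `c`. -/
def inducedLaw (W : (ι → X) → Z → ℝ) (c : ∀ k, I k → X) (z : Z) : ℝ :=
  (∏ k, (Fintype.card (I k) : ℝ))⁻¹ * ∑ i : ∀ k, I k, W (fun k ↦ c k (i k)) z

lemma inducedLaw_nonneg (hW : ∀ x z, 0 ≤ W x z) (c : ∀ k, I k → X) (z : Z) :
    0 ≤ inducedLaw W c z :=
  mul_nonneg (by positivity) (sum_nonneg fun _ _ ↦ hW _ z)

lemma inv_prod_card_mul_sum_le [∀ k, Nonempty (I k)] {f : (∀ k, I k) → ℝ} {b : ℝ}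
    (hf : ∀ i, f i ≤ b) : (∏ k, (Fintype.card (I k) : ℝ))⁻¹ * ∑ i, f i ≤ b := by
  rw [inv_mul_le_iff₀ (prod_pos fun k _ ↦ mod_cast Fintype.card_pos)]
  exact (sum_le_card_nsmul univ f b fun i _ ↦ hf i).trans_eq (by simp)

lemma isDist_inducedLaw [Fintype Z] [∀ k, Nonempty (I k)] (hW : ∀ x, IsDist (W x))
    (c : ∀ k, I k → X) : IsDist (inducedLaw W c) := by
  refine ⟨inducedLaw_nonneg (fun x ↦ (hW x).nonneg) c, ?_⟩
  have hcard : ∏ k, (Fintype.card (I k) : ℝ) ≠ 0 :=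
    prod_ne_zero_iff.mpr fun k _ ↦ mod_cast Fintype.card_ne_zero
  simp only [inducedLaw, ← mul_sum]
  rw [sum_comm]
  simp only [(hW _).sum_eq_one]
  simp [hcard]

lemma absCont_inducedLaw {q : Z → ℝ} (hq : ∀ x, AbsCont (W x) q) (c : ∀ k, I k → X) :
    AbsCont (inducedLaw W c) q := fun z hz ↦ by
  simp only [inducedLaw, hq _ z hz, sum_const_zero, mul_zero]

variable [∀ k, DecidableEq (I k)]

lemma inv_prod_card_mul_card_agree_le [∀ k, Nonempty (I k)] (i : ∀ k, I k) (T : Finset ι) :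
    (∏ k, (Fintype.card (I k) : ℝ))⁻¹ * #{i' : ∀ k, I k | ∀ k ∈ T, i' k = i k} ≤
      ∏ k ∈ T, (Fintype.card (I k) : ℝ)⁻¹ := by
  have hagree : ({i' : ∀ k, I k | ∀ k ∈ T, i' k = i k} : Finset _) =
      Fintype.piFinset fun k ↦ if k ∈ T then {i k} else univ := by
    ext i'
    simp only [mem_filter, mem_univ, true_and, Fintype.mem_piFinset]
    refine forall_congr' fun k ↦ ?_
    split_ifs with hk <;> simp [hk]
  rw [hagree, Fintype.card_piFinset, Nat.cast_prod, ← prod_inv_distrib, ← prod_mul_distrib,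
    ← prod_subset T.subset_univ fun k _ hk ↦ by simp [hk]]
  exact (prod_congr rfl fun k hk ↦ by simp [hk]).le

variable [Fintype X]

lemma sum_codebookLaw_mul_inducedLaw_update_le [∀ k, Nonempty (I k)] (hp : ∀ k, IsDist (p k))
    (hW : ∀ x z, 0 ≤ W x z) {A : Finset ι}
    (hA : ∀ k ∉ A, (Function.support (p k)).Subsingleton) (i : ∀ k, I k) {x : ι → X}
    (hx : prodLaw p x ≠ 0) (z : Z) :
    ∑ c : ∀ k, I k → X,
        codebookLaw p c * inducedLaw W (fun k ↦ Function.update (c k) (i k) (x k)) z ≤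
      ∑ T ∈ A.powerset, (∏ k ∈ T, (Fintype.card (I k) : ℝ)⁻¹) * averagedChannel p W T x z := by
  let agree (i' : ∀ k, I k) : Finset ι := {k | i' k = i k}
  have hselect (i' : ∀ k, I k) : ∑ c : ∀ k, I k → X,
      codebookLaw p c * W (fun k ↦ Function.update (c k) (i k) (x k) (i' k)) z =
        averagedChannel p W (agree i' ∩ A) x z := by
    rw [averagedChannel_inter hA hx, averagedChannel, outputLaw,
      ← sum_codebookLaw_mul_select hp i' fun x' ↦ W ((agree i').piecewise x x') z]
    refine sum_congr rfl fun c _ ↦ ?_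
    congr 2
    ext k
    simp only [Function.update_apply, piecewise, agree, mem_filter, mem_univ, true_and]
  calc ∑ c : ∀ k, I k → X,
        codebookLaw p c * inducedLaw W (fun k ↦ Function.update (c k) (i k) (x k)) z
      = (∏ k, (Fintype.card (I k) : ℝ))⁻¹ * ∑ i', averagedChannel p W (agree i' ∩ A) x z := by
        simp only [← hselect, inducedLaw, mul_left_comm, mul_sum]
        rw [sum_comm]
    _ = (∏ k, (Fintype.card (I k) : ℝ))⁻¹ * ∑ T ∈ A.powerset,
          #{i' | agree i' ∩ A = T} * averagedChannel p W T x z := by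
        rw [← sum_fiberwise_of_maps_to (t := A.powerset) (g := fun i' ↦ agree i' ∩ A)
          fun i' _ ↦ mem_powerset.mpr inter_subset_right]
        congr 1
        refine sum_congr rfl fun T _ ↦ ?_
        rw [← nsmul_eq_mul]
        exact sum_eq_card_nsmul fun i' hi' ↦ by rw [(mem_filter.mp hi').2]
    _ ≤ _ := by
        rw [mul_sum]
        refine sum_le_sum fun T _ ↦ ?_
        rw [← mul_assoc]
        refine mul_le_mul_of_nonneg_right (le_trans ?_ (inv_prod_card_mul_card_agree_le i T))
          (averagedChannel_nonneg (fun k ↦ (hp k).nonneg) hW T x z)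
        refine mul_le_mul_of_nonneg_left (Nat.cast_le.mpr (card_le_card ?_)) (by positivity)
        refine monotone_filter_right _ fun i' _ hi' k hk ↦ ?_
        rw [← hi'] at hk
        exact (mem_filter.mp (mem_inter.mp hk).1).2

lemma sum_codebookLaw_mul_rpow_inducedLaw_update_le [∀ k, Nonempty (I k)]
    (hp : ∀ k, IsDist (p k)) (hW : ∀ x z, 0 ≤ W x z) {A : Finset ι}
    (hA : ∀ k ∉ A, (Function.support (p k)).Subsingleton) {s : ℝ} (hs0 : 0 < s) (hs1 : s ≤ 1)
    (i : ∀ k, I k) {x : ι → X} (hx : prodLaw p x ≠ 0) (z : Z) :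
    ∑ c : ∀ k, I k → X, codebookLaw p c *
        (inducedLaw W (fun k ↦ Function.update (c k) (i k) (x k)) z / outputLaw p W z) ^ s ≤
      1 + ∑ T ∈ A.powerset.erase ∅, (∏ k ∈ T, (Fintype.card (I k) : ℝ)⁻¹) ^ s *
        (averagedChannel p W T x z / outputLaw p W z) ^ s := by
  have hout : 0 ≤ outputLaw p W z := outputLaw_nonneg (fun k ↦ (hp k).nonneg) hW z
  have hratio (T : Finset ι) : 0 ≤ averagedChannel p W T x z / outputLaw p W z :=
    div_nonneg (averagedChannel_nonneg (fun k ↦ (hp k).nonneg) hW T x z) hout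
  have hweight (T : Finset ι) : 0 ≤ ∏ k ∈ T, (Fintype.card (I k) : ℝ)⁻¹ := by positivity
  calc ∑ c : ∀ k, I k → X, codebookLaw p c *
        (inducedLaw W (fun k ↦ Function.update (c k) (i k) (x k)) z / outputLaw p W z) ^ s
      ≤ (∑ c : ∀ k, I k → X, codebookLaw p c *
        (inducedLaw W (fun k ↦ Function.update (c k) (i k) (x k)) z / outputLaw p W z)) ^ s :=
        (isDist_codebookLaw hp).rpow_jensen
          (fun c ↦ div_nonneg (inducedLaw_nonneg hW _ z) hout) hs0.le hs1
    _ ≤ (∑ T ∈ A.powerset, (∏ k ∈ T, (Fintype.card (I k) : ℝ)⁻¹) *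
          (averagedChannel p W T x z / outputLaw p W z)) ^ s := by
        simp only [← mul_div_assoc, ← sum_div]
        refine Real.rpow_le_rpow (div_nonneg (sum_nonneg fun c _ ↦ mul_nonneg
          ((isDist_codebookLaw hp).nonneg c) (inducedLaw_nonneg hW _ z)) hout) ?_ hs0.le
        exact div_le_div_of_nonneg_right
          (sum_codebookLaw_mul_inducedLaw_update_le hp hW hA i hx z) hout
    _ ≤ ∑ T ∈ A.powerset, (∏ k ∈ T, (Fintype.card (I k) : ℝ)⁻¹) ^ s *
          (averagedChannel p W T x z / outputLaw p W z) ^ s := by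
        simp only [← Real.mul_rpow (hweight _) (hratio _)]
        exact rpow_sum_le_sum_rpow (fun T _ ↦ mul_nonneg (hweight T) (hratio T)) hs0 hs1
    _ ≤ _ := by
        rw [← add_sum_erase _ _ (empty_mem_powerset A), averagedChannel_empty, prod_empty,
          Real.one_rpow, one_mul]
        gcongr
        exact Real.rpow_le_one (div_nonneg hout hout) (div_self_le_one _) hs0.le

variable [Fintype Z]

lemma sum_codebookLaw_mul_sum_rpow_inducedLaw_le [∀ k, Nonempty (I k)] (hp : ∀ k, IsDist (p k))
    (hW : ∀ x, IsDist (W x)) {A : Finset ι}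
    (hA : ∀ k ∉ A, (Function.support (p k)).Subsingleton) {s : ℝ} (hs0 : 0 < s) (hs1 : s ≤ 1) :
    ∑ c : ∀ k, I k → X, codebookLaw p c *
        ∑ z, inducedLaw W c z * (inducedLaw W c z / outputLaw p W z) ^ s ≤
      1 + ∑ T ∈ A.powerset.erase ∅, (∏ k ∈ T, (Fintype.card (I k) : ℝ)⁻¹) ^ s *
        infoMoment p W T s := by
  let density (c : ∀ k, I k → X) (z : Z) : ℝ := (inducedLaw W c z / outputLaw p W z) ^ s
  have hindex (i : ∀ k, I k) : ∑ c : ∀ k, I k → X, codebookLaw p c *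
      ∑ z, W (fun k ↦ c k (i k)) z * density c z ≤
        1 + ∑ T ∈ A.powerset.erase ∅, (∏ k ∈ T, (Fintype.card (I k) : ℝ)⁻¹) ^ s *
          infoMoment p W T s := by
    calc _ = ∑ x, prodLaw p x * ∑ z, W x z * ∑ c : ∀ k, I k → X,
            codebookLaw p c * density (fun k ↦ Function.update (c k) (i k) (x k)) z := by
          rw [sum_codebookLaw_resample hp i]
          simp only [Function.update_self, mul_sum]
          rw [sum_comm]
          refine sum_congr rfl fun x _ ↦ ?_
          rw [sum_comm]
          exact sum_congr rfl fun z _ ↦ sum_congr rfl fun c _ ↦ by ring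
      _ ≤ ∑ x, prodLaw p x * ∑ z, W x z * (1 + ∑ T ∈ A.powerset.erase ∅,
            (∏ k ∈ T, (Fintype.card (I k) : ℝ)⁻¹) ^ s *
              (averagedChannel p W T x z / outputLaw p W z) ^ s) := by
          refine sum_le_sum fun x _ ↦ ?_
          rcases ((isDist_prodLaw hp).nonneg x).eq_or_lt with hx | hx
          · simp only [← hx, zero_mul, le_refl]
          exact mul_le_mul_of_nonneg_left (sum_le_sum fun z _ ↦ mul_le_mul_of_nonneg_left
            (sum_codebookLaw_mul_rpow_inducedLaw_update_le hp (fun x ↦ (hW x).nonneg) hA hs0 hs1 i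
              hx.ne' z) ((hW x).nonneg z)) hx.le
      _ = _ := by
          simp only [mul_add, mul_one, sum_add_distrib, (hW _).sum_eq_one,
            (isDist_prodLaw hp).sum_eq_one, infoMoment, mul_sum]
          congr 1
          refine (sum_congr rfl fun x _ ↦ sum_comm).trans (sum_comm.trans ?_)
          exact sum_congr rfl fun T _ ↦ sum_congr rfl fun x _ ↦ sum_congr rfl fun z _ ↦ by ring
  calc _ = (∏ k, (Fintype.card (I k) : ℝ))⁻¹ * ∑ i : ∀ k, I k, ∑ c : ∀ k, I k → X,
        codebookLaw p c * ∑ z, W (fun k ↦ c k (i k)) z * density c z := by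
        rw [sum_comm, mul_sum]
        refine sum_congr rfl fun c _ ↦ ?_
        rw [← mul_sum, mul_left_comm, sum_comm]
        congr 1
        rw [mul_sum]
        refine sum_congr rfl fun z _ ↦ ?_
        rw [← sum_mul, ← mul_assoc]
        rfl
    _ ≤ _ := inv_prod_card_mul_sum_le hindex

lemma sum_codebookLaw_mul_klDiv_inducedLaw_le [∀ k, Nonempty (I k)] (hp : ∀ k, IsDist (p k))
    (hW : ∀ x, IsDist (W x)) (hAC : ∀ x, AbsCont (W x) (outputLaw p W)) {A : Finset ι}
    (hA : ∀ k ∉ A, (Function.support (p k)).Subsingleton) {s : ℝ} (hs0 : 0 < s) (hs1 : s ≤ 1) :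
    ∑ c : ∀ k, I k → X, codebookLaw p c * klDiv (inducedLaw W c) (outputLaw p W) ≤
      s⁻¹ * ∑ T ∈ A.powerset.erase ∅, (∏ k ∈ T, (Fintype.card (I k) : ℝ)⁻¹) ^ s *
        infoMoment p W T s := by
  rw [le_inv_mul_iff₀ hs0, mul_sum]
  calc ∑ c : ∀ k, I k → X, s * (codebookLaw p c * klDiv (inducedLaw W c) (outputLaw p W))
      ≤ ∑ c : ∀ k, I k → X, codebookLaw p c *
          (∑ z, inducedLaw W c z * (inducedLaw W c z / outputLaw p W z) ^ s - 1) := by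
        refine sum_le_sum fun c _ ↦ ?_
        rw [mul_left_comm]
        exact mul_le_mul_of_nonneg_left (mul_klDiv_le_sum_rpow (isDist_inducedLaw hW c)
          (isDist_outputLaw hp hW).nonneg (absCont_inducedLaw hAC c) s)
          ((isDist_codebookLaw hp).nonneg c)
    _ ≤ _ := by
        simp only [mul_sub, sum_sub_distrib, (isDist_codebookLaw hp).sum_mul_const]
        exact sub_le_iff_le_add'.mpr
          (sum_codebookLaw_mul_sum_rpow_inducedLaw_le hp hW hA hs0 hs1)

end Resolvability

section Decoder

variable {ι X Y : Type*} {J S : ι → Type*} [∀ k, Nonempty (J k)] {r : ι → X → Y → ℝ}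
  {θ : ι → ℝ}

/-- The decoder that, for each user `k` separately, outputs a message whose codeword under the known
key `l k` has score exceeding `θ k`, and an arbitrary message if there is none. -/
def thresholdDecoder (r : ι → X → Y → ℝ) (θ : ι → ℝ) (c : ∀ k, J k × S k → X) (y : Y)
    (l : ∀ k, S k) (k : ι) : J k :=
  Classical.epsilon fun m ↦ θ k < r k (c k (m, l k)) y

variable [∀ k, Fintype (J k)] [∀ k, DecidableEq (J k)]

lemma one_le_of_thresholdDecoder_ne (hr : ∀ k v y, 0 ≤ r k v y) (hθ : ∀ k, 0 < θ k) {s : ι → ℝ}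
    (hs : ∀ k, 0 ≤ s k) {c : ∀ k, J k × S k → X} {y : Y} {m : ∀ k, J k} {l : ∀ k, S k} {k : ι}
    (hrk : r k (c k (m k, l k)) y ≠ 0) (hne : thresholdDecoder r θ c y l k ≠ m k) :
    1 ≤ θ k ^ s k * (r k (c k (m k, l k)) y)⁻¹ ^ s k +
      ∑ m' ∈ univ.erase (m k), (θ k)⁻¹ * r k (c k (m', l k)) y := by
  have hscore (m' : J k) : 0 ≤ (θ k)⁻¹ * r k (c k (m', l k)) y :=
    mul_nonneg (inv_nonneg.mpr (hθ k).le) (hr k _ y)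
  by_cases hmiss : r k (c k (m k, l k)) y ≤ θ k
  · have hpos : 0 < r k (c k (m k, l k)) y := (hr k _ y).lt_of_ne' hrk
    rw [← Real.mul_rpow (hθ k).le (inv_nonneg.mpr hpos.le)]
    refine le_add_of_le_of_nonneg (Real.one_le_rpow ?_ (hs k)) (sum_nonneg fun m' _ ↦ hscore m')
    rwa [← div_eq_mul_inv, one_le_div hpos]
  · have hwrong : θ k < r k (c k (thresholdDecoder r θ c y l k, l k)) y :=
      Classical.epsilon_spec (p := fun m' ↦ θ k < r k (c k (m', l k)) y) ⟨m k, not_le.mp hmiss⟩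
    refine le_add_of_nonneg_of_le (mul_nonneg (Real.rpow_nonneg (hθ k).le _)
      (Real.rpow_nonneg (inv_nonneg.mpr (hr k _ y)) _)) ?_
    refine le_trans ?_ (single_le_sum (fun m' _ ↦ hscore m') (mem_erase.mpr ⟨hne, mem_univ _⟩))
    rw [inv_mul_eq_div, one_le_div (hθ k)]
    exact hwrong.le

lemma decodingError_le [Fintype ι] (hr : ∀ k v y, 0 ≤ r k v y) (hθ : ∀ k, 0 < θ k) {s : ι → ℝ}
    (hs : ∀ k, 0 ≤ s k) {B : Finset ι} (hB : ∀ k ∉ B, Subsingleton (J k))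
    {c : ∀ k, J k × S k → X} {y : Y} {m : ∀ k, J k} {l : ∀ k, S k}
    (hrm : ∀ k, r k (c k (m k, l k)) y ≠ 0) :
    (if thresholdDecoder r θ c y l = m then 0 else 1) ≤
      ∑ k ∈ B, (θ k ^ s k * (r k (c k (m k, l k)) y)⁻¹ ^ s k +
        ∑ m' ∈ univ.erase (m k), (θ k)⁻¹ * r k (c k (m', l k)) y) := by
  have hterm (k : ι) : 0 ≤ θ k ^ s k * (r k (c k (m k, l k)) y)⁻¹ ^ s k +
      ∑ m' ∈ univ.erase (m k), (θ k)⁻¹ * r k (c k (m', l k)) y :=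
    add_nonneg (mul_nonneg (Real.rpow_nonneg (hθ k).le _)
      (Real.rpow_nonneg (inv_nonneg.mpr (hr k _ y)) _))
      (sum_nonneg fun m' _ ↦ mul_nonneg (inv_nonneg.mpr (hθ k).le) (hr k _ y))
  split_ifs with hdec
  · exact sum_nonneg fun k _ ↦ hterm k
  · obtain ⟨k, hk⟩ := Function.ne_iff.mp hdec
    have hkB : k ∈ B := by
      by_contra hkB
      exact hk ((hB k hkB).elim _ _)
    exact (one_le_of_thresholdDecoder_ne hr hθ hs (hrm k) hk).trans
      (single_le_sum (fun k _ ↦ hterm k) hkB)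

end Decoder

section Reliability

variable {ι X Y : Type*} [Fintype ι] [DecidableEq ι] [Fintype X] [Fintype Y]

/-- The moment of order `-s` of the score `r` of user `k`, between its own symbol and the output of
`W`; it controls the probability that the transmitted codeword scores below the threshold. -/
def missMoment (p : ι → X → ℝ) (W : (ι → X) → Y → ℝ) (k : ι) (r : X → Y → ℝ) (s : ℝ) : ℝ :=
  ∑ x, prodLaw p x * ∑ y, W x y * (r (x k) y)⁻¹ ^ s

/-- The mean score `r` of a symbol of user `k` that is independent of the output of `W`; it controls
the probability that a wrong codeword scores above the threshold. -/
def falseAlarmMoment (p : ι → X → ℝ) (W : (ι → X) → Y → ℝ) (k : ι) (r : X → Y → ℝ) : ℝ :=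
  ∑ y, outputLaw p W y * ∑ v, p k v * r v y

variable {p : ι → X → ℝ} {W : (ι → X) → Y → ℝ}

lemma falseAlarmMoment_eq_sum_prodLaw_mul (k : ι) (r : X → Y → ℝ) :
    falseAlarmMoment p W k r = ∑ x, prodLaw p x * ∑ y, W x y * ∑ v, p k v * r v y := by
  simp only [falseAlarmMoment, outputLaw, sum_mul, mul_assoc]
  rw [Finset.sum_comm]
  simp only [mul_sum]

lemma missMoment_nonneg (hp : ∀ k v, 0 ≤ p k v) (hW : ∀ x y, 0 ≤ W x y) (k : ι) {r : X → Y → ℝ}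
    (hr : ∀ v y, 0 ≤ r v y) (s : ℝ) : 0 ≤ missMoment p W k r s :=
  sum_nonneg fun x _ ↦ mul_nonneg (prod_nonneg fun k _ ↦ hp k (x k)) <| sum_nonneg fun y _ ↦
    mul_nonneg (hW x y) <| Real.rpow_nonneg (inv_nonneg.mpr (hr _ y)) s

lemma falseAlarmMoment_nonneg (hp : ∀ k v, 0 ≤ p k v) (hW : ∀ x y, 0 ≤ W x y) (k : ι)
    {r : X → Y → ℝ} (hr : ∀ v y, 0 ≤ r v y) : 0 ≤ falseAlarmMoment p W k r :=
  sum_nonneg fun y _ ↦ mul_nonneg (outputLaw_nonneg hp hW y) <| sum_nonneg fun v _ ↦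
    mul_nonneg (hp k v) (hr v y)

lemma sum_codebookLaw_mul_falseAlarm {I : ι → Type*} [∀ k, Fintype (I k)]
    [∀ k, DecidableEq (I k)] (hp : ∀ k, IsDist (p k)) (i : ∀ k, I k) {k : ι} {b : I k}
    (hb : b ≠ i k) (r : X → Y → ℝ) :
    ∑ c, codebookLaw p c * ∑ y, W (fun k ↦ c k (i k)) y * r (c k b) y =
      falseAlarmMoment p W k r := by
  rw [sum_codebookLaw_mul_select_pair hp i hb fun x v ↦ ∑ y, W x y * r v y]
  simp only [falseAlarmMoment, outputLaw, mul_sum, sum_mul]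
  rw [(sum_congr rfl fun x _ ↦ sum_comm).trans sum_comm]
  refine sum_congr rfl fun y _ ↦ ?_
  rw [sum_comm]
  exact sum_congr rfl fun v _ ↦ sum_congr rfl fun x _ ↦ by ring

variable {J S : ι → Type*} [∀ k, Fintype (J k)] [∀ k, DecidableEq (J k)] [∀ k, Nonempty (J k)]
  [∀ k, Fintype (S k)] [∀ k, DecidableEq (S k)] {r : ι → X → Y → ℝ} {θ : ι → ℝ}

lemma sum_codebookLaw_mul_decodingError_le (hp : ∀ k, IsDist (p k)) (hW : ∀ x y, 0 ≤ W x y)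
    (hr : ∀ k v y, 0 ≤ r k v y) (hrW : ∀ x k y, r k (x k) y = 0 → W x y = 0)
    (hθ : ∀ k, 0 < θ k) {s : ι → ℝ} (hs : ∀ k, 0 ≤ s k) {B : Finset ι}
    (hB : ∀ k ∉ B, Subsingleton (J k)) (m : ∀ k, J k) (l : ∀ k, S k) :
    ∑ c : ∀ k, J k × S k → X, codebookLaw p c * ∑ y, W (fun k ↦ c k (m k, l k)) y *
        (if thresholdDecoder r θ c y l = m then 0 else 1) ≤
      ∑ k ∈ B, (θ k ^ s k * missMoment p W k (r k) (s k) +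
        Fintype.card (J k) * ((θ k)⁻¹ * falseAlarmMoment p W k (r k))) := by
  let weight (q : (∀ k, J k × S k → X) × Y) : ℝ :=
    codebookLaw p q.1 * W (fun k ↦ q.1 k (m k, l k)) q.2
  have hmean (g : (∀ k, J k × S k → X) → Y → ℝ) :
      ∑ c, codebookLaw p c * ∑ y, W (fun k ↦ c k (m k, l k)) y * g c y =
        ∑ q, weight q * g q.1 q.2 := by
    simp only [Fintype.sum_prod_type, mul_sum, mul_assoc, weight]
  have hmiss (k : ι) :
      ∑ q, weight q * (r k (q.1 k (m k, l k)) q.2)⁻¹ ^ s k = missMoment p W k (r k) (s k) :=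
    (hmean _).symm.trans <| sum_codebookLaw_mul_select hp (fun k ↦ (m k, l k))
      fun x ↦ ∑ y, W x y * (r k (x k) y)⁻¹ ^ s k
  have hfalse (k : ι) {m' : J k} (hm' : m' ≠ m k) :
      ∑ q, weight q * r k (q.1 k (m', l k)) q.2 = falseAlarmMoment p W k (r k) :=
    (hmean _).symm.trans <| sum_codebookLaw_mul_falseAlarm hp (fun k ↦ (m k, l k))
      (b := (m', l k)) (fun h ↦ hm' (congrArg Prod.fst h)) (r k)
  calc _ ≤ ∑ c : ∀ k, J k × S k → X, codebookLaw p c * ∑ y, W (fun k ↦ c k (m k, l k)) y *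
        ∑ k ∈ B, (θ k ^ s k * (r k (c k (m k, l k)) y)⁻¹ ^ s k +
          ∑ m' ∈ univ.erase (m k), (θ k)⁻¹ * r k (c k (m', l k)) y) := by
        refine sum_le_sum fun c _ ↦ mul_le_mul_of_nonneg_left (sum_le_sum fun y _ ↦ ?_)
          ((isDist_codebookLaw hp).nonneg c)
        rcases eq_or_ne (W (fun k ↦ c k (m k, l k)) y) 0 with hy | hy
        · simp only [hy, zero_mul, le_refl]
        exact mul_le_mul_of_nonneg_left
          (decodingError_le hr hθ hs hB fun k h ↦ hy (hrW _ k y h)) (hW _ y)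
    _ = ∑ k ∈ B, (θ k ^ s k * missMoment p W k (r k) (s k) +
          ∑ _ ∈ univ.erase (m k), (θ k)⁻¹ * falseAlarmMoment p W k (r k)) := by
        refine (hmean _).trans ?_
        simp only [mul_sum (s := B)]
        rw [sum_comm]
        refine sum_congr rfl fun k _ ↦ ?_
        rw [← hmiss]
        simp only [mul_add, sum_add_distrib, mul_sum]
        congr 1
        · exact sum_congr rfl fun q _ ↦ mul_left_comm _ _ _
        · rw [sum_comm]
          refine sum_congr rfl fun _ hm' ↦ ?_
          rw [← hfalse k (ne_of_mem_erase hm'), mul_sum]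
          exact sum_congr rfl fun q _ ↦ mul_left_comm _ _ _
    _ ≤ _ := by
        refine sum_le_sum fun k _ ↦ add_le_add_right ?_ _
        rw [sum_const, nsmul_eq_mul]
        refine mul_le_mul_of_nonneg_right (Nat.cast_le.mpr (card_le_univ _))
          (mul_nonneg (inv_nonneg.mpr (hθ k).le)
            (falseAlarmMoment_nonneg (fun k ↦ (hp k).nonneg) hW k (hr k)))

end Reliability

section Block

variable {ι X Z : Type*}

/-- The input law of user `k` over `n` channel uses: its symbols are i.i.d. with law `p k`. -/
def blockLaw (p : ι → X → ℝ) (n : ℕ) (k : ι) : (Fin n → X) → ℝ :=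
  prodLaw fun _ : Fin n ↦ p k

/-- The memoryless extension of `W` to blocks of length `n`, with the codeword of each user as its
input; `prodChannel` takes the transpose of this input. -/
def blockChannel (W : (ι → X) → Z → ℝ) (n : ℕ) (x : ι → Fin n → X) : (Fin n → Z) → ℝ :=
  prodChannel W n fun j k ↦ x k j

variable {n : ℕ} {p : ι → X → ℝ} {W : (ι → X) → Z → ℝ}

lemma isDist_blockLaw [Fintype X] (hp : ∀ k, IsDist (p k)) (k : ι) : IsDist (blockLaw p n k) :=
  isDist_prodLaw fun _ ↦ hp k

lemma isDist_blockChannel [Fintype Z] (hW : ∀ x, IsDist (W x)) (x : ι → Fin n → X) :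
    IsDist (blockChannel W n x) :=
  isDist_prodLaw fun j ↦ hW fun k ↦ x k j

lemma prodChannel_nonneg {A : Type*} {V : A → Z → ℝ} (hV : ∀ a z, 0 ≤ V a z) (x : Fin n → A)
    (z : Fin n → Z) : 0 ≤ prodChannel V n x z :=
  prod_nonneg fun j _ ↦ hV (x j) (z j)

variable [Fintype ι]

lemma prodLaw_blockLaw (x : ι → Fin n → X) :
    prodLaw (blockLaw p n) x = ∏ j, prodLaw p fun k ↦ x k j := by
  simp only [blockLaw, prodLaw]
  exact Finset.prod_comm

variable [DecidableEq ι] [Fintype X]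

lemma sum_prod_letters {J : Type*} [Fintype J] [DecidableEq J] (f : J → (ι → X) → ℝ) :
    ∑ x : ι → J → X, ∏ j, f j (fun k ↦ x k j) = ∏ j, ∑ u, f j u := by
  rw [Fintype.prod_sum]
  exact (Equiv.piComm fun _ _ ↦ X).sum_comp fun x : J → ι → X ↦ ∏ j, f j (x j)

lemma outputLaw_block (z : Fin n → Z) :
    outputLaw (blockLaw p n) (blockChannel W n) z = ∏ j, outputLaw p W (z j) := by
  simp only [outputLaw, prodLaw_blockLaw, blockChannel, prodChannel, ← prod_mul_distrib]
  exact sum_prod_letters fun j u ↦ prodLaw p u * W u (z j)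

lemma averagedChannel_block (T : Finset ι) (x : ι → Fin n → X) (z : Fin n → Z) :
    averagedChannel (blockLaw p n) (blockChannel W n) T x z =
      ∏ j, averagedChannel p W T (fun k ↦ x k j) (z j) := by
  simp only [averagedChannel, outputLaw, prodLaw_blockLaw, blockChannel, prodChannel,
    ← prod_mul_distrib]
  rw [← sum_prod_letters]
  refine sum_congr rfl fun x' _ ↦ prod_congr rfl fun j _ ↦ ?_
  congr 3
  ext k
  by_cases hk : k ∈ T <;> simp only [piecewise, hk, if_true, if_false]

variable [Fintype Z]

lemma sum_blockLaw_mul_sum_prod (g : (ι → X) → Z → ℝ) :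
    ∑ x, prodLaw (blockLaw p n) x * ∑ z : Fin n → Z, ∏ j, g (fun k ↦ x k j) (z j) =
      (∑ u, prodLaw p u * ∑ z, g u z) ^ n := by
  simp only [← Fintype.prod_sum, prodLaw_blockLaw, ← prod_mul_distrib]
  rw [sum_prod_letters fun _ u ↦ prodLaw p u * ∑ z, g u z, prod_const, card_univ, Fintype.card_fin]

lemma infoMoment_block (hp : ∀ k v, 0 ≤ p k v) (hW : ∀ x z, 0 ≤ W x z) (T : Finset ι) (s : ℝ) :
    infoMoment (blockLaw p n) (blockChannel W n) T s = infoMoment p W T s ^ n := by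
  rw [infoMoment, infoMoment, ← sum_blockLaw_mul_sum_prod]
  refine sum_congr rfl fun x _ ↦ congrArg _ (sum_congr rfl fun z _ ↦ ?_)
  rw [averagedChannel_block, outputLaw_block, ← prod_div_distrib,
    ← Real.finsetProd_rpow _ _ fun j _ ↦ div_nonneg (averagedChannel_nonneg hp hW T _ _)
      (outputLaw_nonneg hp hW _), blockChannel, prodChannel, prod_mul_distrib]

lemma missMoment_block (k : ι) {r : X → Z → ℝ} (hr : ∀ v z, 0 ≤ r v z) (s : ℝ) :
    missMoment (blockLaw p n) (blockChannel W n) k (prodChannel r n) s =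
      missMoment p W k r s ^ n := by
  rw [missMoment, missMoment, ← sum_blockLaw_mul_sum_prod]
  refine sum_congr rfl fun x _ ↦ congrArg _ (sum_congr rfl fun z _ ↦ ?_)
  rw [prodChannel, ← prod_inv_distrib,
    ← Real.finsetProd_rpow _ _ fun j _ ↦ inv_nonneg.mpr (hr _ _), blockChannel, prodChannel,
    prod_mul_distrib]

lemma falseAlarmMoment_block (k : ι) (r : X → Z → ℝ) :
    falseAlarmMoment (blockLaw p n) (blockChannel W n) k (prodChannel r n) =
      falseAlarmMoment p W k r ^ n := by
  have hwrong (z : Fin n → Z) : ∑ v, blockLaw p n k v * prodChannel r n v z =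
      ∏ j, ∑ u, p k u * r u (z j) := by
    simp only [Fintype.prod_sum, blockLaw, prodLaw, prodChannel, prod_mul_distrib]
  simp only [falseAlarmMoment, outputLaw_block, hwrong, ← prod_mul_distrib]
  rw [← Fintype.prod_sum fun (_ : Fin n) z ↦ outputLaw p W z * ∑ v, p k v * r v z, prod_const,
    card_univ, Fintype.card_fin]

end Block

section RandomCoding

lemma sum_message_key {ι : Type*} {J S : ι → Type*} [Fintype ι] [DecidableEq ι]
    [∀ k, Fintype (J k)] [∀ k, Fintype (S k)] (f : (∀ k, J k × S k) → ℝ) :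
    ∑ m : ∀ k, J k, ∑ l : ∀ k, S k, f (fun k ↦ (m k, l k)) = ∑ i, f i :=
  (Fintype.sum_prod_type' _).symm.trans (Equiv.arrowProdEquivProdArrow ι J S |>.symm.sum_comp f)

lemma support_blockLaw_subsingleton {ι X : Type*} {p : ι → X → ℝ} {n : ℕ} {k : ι}
    (hpk : (Function.support (p k)).Subsingleton) :
    (Function.support (blockLaw p n k)).Subsingleton := by
  have hcoord {v : Fin n → X} (hv : blockLaw p n k v ≠ 0) (j : Fin n) : p k (v j) ≠ 0 := by
    rw [blockLaw, prodLaw] at hv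
    exact prod_ne_zero_iff.mp hv j (mem_univ j)
  exact fun v hv v' hv' ↦ funext fun j ↦ hpk (hcoord hv j) (hcoord hv' j)

variable {K n : ℕ} {Y Z : Type*} [Fintype Y] [Fintype Z] {Wy : (Fin K → Bool) → Y → ℝ}
  {Wz : (Fin K → Bool) → Z → ℝ} {M L : Fin K → ℕ} {p : Fin K → Bool → ℝ}

lemma Qhat_eq_inducedLaw (enc : ∀ k, Fin (M k) × Fin (L k) → Fin n → Bool) :
    Qhat Wz M L enc = inducedLaw (blockChannel Wz n) enc := by
  ext z
  simp only [Qhat, inducedLaw, Fintype.card_prod, Fintype.card_fin, Nat.cast_mul]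
  congr 1
  exact sum_message_key fun i ↦ blockChannel Wz n (fun k ↦ enc k (i k)) z

lemma Pe_nonneg (hWy : ∀ x y, 0 ≤ Wy x y) (enc : ∀ k, Fin (M k) × Fin (L k) → Fin n → Bool)
    (dec : (Fin n → Y) → (∀ k, Fin (L k)) → ∀ k, Fin (M k)) : 0 ≤ Pe Wy M L enc dec :=
  mul_nonneg (by positivity) <| sum_nonneg fun _ _ ↦ sum_nonneg fun _ _ ↦ sum_nonneg fun _ _ ↦
    mul_nonneg (prodChannel_nonneg hWy _ _) (by split_ifs <;> norm_num)

lemma absCont_Qhat {q : Z → ℝ} (hq : ∀ x, AbsCont (Wz x) q)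
    (enc : ∀ k, Fin (M k) × Fin (L k) → Fin n → Bool) :
    AbsCont (Qhat Wz M L enc) (prodLaw fun _ ↦ q) := by
  rw [Qhat_eq_inducedLaw]
  exact absCont_inducedLaw (fun x : Fin K → Fin n → Bool ↦
    absCont_prodLaw fun j ↦ hq fun k ↦ x k j) enc

variable [∀ k, NeZero (M k)] [∀ k, NeZero (L k)]

lemma isDist_Qhat (hWz : ∀ x, IsDist (Wz x))
    (enc : ∀ k, Fin (M k) × Fin (L k) → Fin n → Bool) : IsDist (Qhat Wz M L enc) := by
  rw [Qhat_eq_inducedLaw]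
  exact isDist_inducedLaw (isDist_blockChannel hWz) enc

lemma sum_codebookLaw_mul_klDiv_Qhat_le (hp : ∀ k, IsDist (p k)) (hWz : ∀ x, IsDist (Wz x))
    (hAC : ∀ x, AbsCont (Wz x) (outputLaw p Wz)) {A : Finset (Fin K)}
    (hA : ∀ k ∉ A, (Function.support (p k)).Subsingleton) {s : ℝ} (hs0 : 0 < s) (hs1 : s ≤ 1) :
    ∑ enc : ∀ k, Fin (M k) × Fin (L k) → Fin n → Bool, codebookLaw (blockLaw p n) enc *
        klDiv (Qhat Wz M L enc) (prodLaw fun _ ↦ outputLaw p Wz) ≤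
      s⁻¹ * ∑ T ∈ A.powerset.erase ∅,
        (∏ k ∈ T, ((M k : ℝ) * L k)⁻¹) ^ s * infoMoment p Wz T s ^ n := by
  have hout : outputLaw (blockLaw p n) (blockChannel Wz n) = prodLaw fun _ ↦ outputLaw p Wz :=
    funext outputLaw_block
  have hbound := sum_codebookLaw_mul_klDiv_inducedLaw_le (I := fun k ↦ Fin (M k) × Fin (L k))
    (p := blockLaw p n) (W := blockChannel Wz n)
    (isDist_blockLaw hp) (isDist_blockChannel hWz)
    (fun x ↦ hout ▸ absCont_prodLaw fun j ↦ hAC fun k ↦ x k j)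
    (fun k hk ↦ support_blockLaw_subsingleton (hA k hk)) hs0 hs1
  rw [hout] at hbound
  simpa only [Qhat_eq_inducedLaw, Fintype.card_prod, Fintype.card_fin, Nat.cast_mul,
    infoMoment_block (fun k ↦ (hp k).nonneg) (fun x ↦ (hWz x).nonneg)] using hbound

variable {r : Fin K → Bool → Y → ℝ} {θ σ : Fin K → ℝ} {B : Finset (Fin K)}

lemma sum_codebookLaw_mul_Pe_le (hp : ∀ k, IsDist (p k))
    (hWy : ∀ x y, 0 ≤ Wy x y) (hr : ∀ k v y, 0 ≤ r k v y)
    (hrW : ∀ x k y, r k (x k) y = 0 → Wy x y = 0) (hθ : ∀ k, 0 < θ k) (hσ : ∀ k, 0 ≤ σ k)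
    (hB : ∀ k ∉ B, M k = 1) :
    ∑ enc : ∀ k, Fin (M k) × Fin (L k) → Fin n → Bool, codebookLaw (blockLaw p n) enc *
        Pe Wy M L enc (thresholdDecoder (fun k ↦ prodChannel (r k) n) θ enc) ≤
      ∑ k ∈ B, (θ k ^ σ k * missMoment p Wy k (r k) (σ k) ^ n +
        M k * ((θ k)⁻¹ * falseAlarmMoment p Wy k (r k) ^ n)) := by
  let decoder := thresholdDecoder (J := fun k ↦ Fin (M k)) (S := fun k ↦ Fin (L k))
    (fun k ↦ prodChannel (r k) n) θ
  have hzero (x : Fin K → Fin n → Bool) (k : Fin K) (y : Fin n → Y)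
      (hy : prodChannel (r k) n (x k) y = 0) : blockChannel Wy n x y = 0 := by
    obtain ⟨j, hj, hrj⟩ := prod_eq_zero_iff.mp hy
    exact prod_eq_zero hj (hrW (fun k ↦ x k j) k (y j) hrj)
  let error (enc : ∀ k, Fin (M k) × Fin (L k) → Fin n → Bool)
      (i : ∀ k, Fin (M k) × Fin (L k)) : ℝ :=
    ∑ y, blockChannel Wy n (fun k ↦ enc k (i k)) y *
      if decoder enc y (fun k ↦ (i k).2) = fun k ↦ (i k).1 then 0 else 1
  have herror (i : ∀ k, Fin (M k) × Fin (L k)) : ∑ enc, codebookLaw (blockLaw p n) enc *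
      error enc i ≤ ∑ k ∈ B, (θ k ^ σ k * missMoment p Wy k (r k) (σ k) ^ n +
        M k * ((θ k)⁻¹ * falseAlarmMoment p Wy k (r k) ^ n)) := by
    refine (sum_codebookLaw_mul_decodingError_le
      (p := blockLaw p n) (W := blockChannel Wy n) (B := B) (isDist_blockLaw hp)
      (fun x ↦ prodChannel_nonneg hWy fun j k ↦ x k j) (fun k ↦ prodChannel_nonneg (hr k))
      hzero hθ hσ (fun k hk ↦ ?_) (fun k ↦ (i k).1) fun k ↦ (i k).2).trans_eq ?_
    · rw [hB k hk]
      infer_instance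
    · simp only [missMoment_block _ (hr _), falseAlarmMoment_block, Fintype.card_fin]
  have hPe (enc) : Pe Wy M L enc (decoder enc) =
      (∏ k, (Fintype.card (Fin (M k) × Fin (L k)) : ℝ))⁻¹ * ∑ i, error enc i := by
    simp only [Pe, Fintype.card_prod, Fintype.card_fin, Nat.cast_mul]
    congr 1
    exact sum_message_key (error enc)
  change ∑ enc, codebookLaw (blockLaw p n) enc * Pe Wy M L enc (decoder enc) ≤ _
  simp only [hPe, mul_left_comm (codebookLaw _ _), ← mul_sum]
  simp only [mul_sum _ _ (codebookLaw _ _)]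
  rw [sum_comm]
  exact inv_prod_card_mul_sum_le herror

lemma exists_code (hp : ∀ k, IsDist (p k)) (hWy : ∀ x y, 0 ≤ Wy x y) (hWz : ∀ x, IsDist (Wz x))
    (hAC : ∀ x, AbsCont (Wz x) (outputLaw p Wz)) (hr : ∀ k v y, 0 ≤ r k v y)
    (hrW : ∀ x k y, r k (x k) y = 0 → Wy x y = 0) (hθ : ∀ k, 0 < θ k) (hσ : ∀ k, 0 ≤ σ k)
    (hB : ∀ k ∉ B, M k = 1) {A : Finset (Fin K)}
    (hA : ∀ k ∉ A, (Function.support (p k)).Subsingleton) {s : ℝ} (hs0 : 0 < s) (hs1 : s ≤ 1)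
    {w : ℝ} (hw : 0 ≤ w) :
    ∃ (enc : ∀ k, Fin (M k) × Fin (L k) → Fin n → Bool)
      (dec : (Fin n → Y) → (∀ k, Fin (L k)) → ∀ k, Fin (M k)),
      Pe Wy M L enc dec + w * klDiv (Qhat Wz M L enc) (prodLaw fun _ ↦ outputLaw p Wz) ≤
        ∑ k ∈ B, (θ k ^ σ k * missMoment p Wy k (r k) (σ k) ^ n +
          M k * ((θ k)⁻¹ * falseAlarmMoment p Wy k (r k) ^ n)) +
        w * (s⁻¹ * ∑ T ∈ A.powerset.erase ∅,
          (∏ k ∈ T, ((M k : ℝ) * L k)⁻¹) ^ s * infoMoment p Wz T s ^ n) := by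
  obtain ⟨enc, henc⟩ := (isDist_codebookLaw (isDist_blockLaw hp)).exists_le_sum
    fun enc : ∀ k, Fin (M k) × Fin (L k) → Fin n → Bool ↦
      Pe Wy M L enc (thresholdDecoder (fun k ↦ prodChannel (r k) n) θ enc) +
        w * klDiv (Qhat Wz M L enc) (prodLaw fun _ ↦ outputLaw p Wz)
  refine ⟨enc, _, henc.trans ?_⟩
  simp only [mul_add (codebookLaw _ _), sum_add_distrib (f := fun enc ↦ codebookLaw _ enc * _),
    mul_left_comm _ w, ← mul_sum _ _ w]
  exact add_le_add (sum_codebookLaw_mul_Pe_le hp hWy hr hrW hθ hσ hB)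
    (mul_le_mul_of_nonneg_left (sum_codebookLaw_mul_klDiv_Qhat_le hp hWz hAC hA hs0 hs1) hw)

end RandomCoding

section SecondOrderDivergence

lemma tendsto_klFun_div_sub_one_sq :
    Tendsto (fun x : ℝ ↦ InformationTheory.klFun x / (x - 1) ^ 2) (𝓝[≠] 1) (𝓝 (1 / 2)) := by
  have hlog : Tendsto (fun x : ℝ ↦ Real.log x / (2 * (x - 1))) (𝓝[≠] 1) (𝓝 (1 / 2)) := by
    have hslope := (hasDerivAt_iff_tendsto_slope.mp (Real.hasDerivAt_log one_ne_zero)).div_const 2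
    rw [inv_one] at hslope
    refine hslope.congr fun x ↦ ?_
    rw [slope_def_field, Real.log_one, sub_zero, div_div, mul_comm]
  have hsq (x : ℝ) : HasDerivAt (fun x : ℝ ↦ (x - 1) ^ 2) (2 * (x - 1)) x := by
    simpa using ((hasDerivAt_id x).sub_const 1).fun_pow 2
  refine HasDerivAt.lhopital_zero_nhdsNE (f' := Real.log) (g' := fun x ↦ 2 * (x - 1)) ?_
    (.of_forall hsq) ?_ ?_ ?_ hlog
  · filter_upwards [nhdsWithin_le_nhds (eventually_ne_nhds one_ne_zero)] with x hx
    exact InformationTheory.hasDerivAt_klFun hx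
  · filter_upwards [self_mem_nhdsWithin] with x hx
    exact mul_ne_zero two_ne_zero (sub_ne_zero.mpr hx)
  · exact tendsto_nhdsWithin_of_tendsto_nhds
      (InformationTheory.klFun_one ▸ InformationTheory.continuous_klFun.tendsto 1)
  · simpa using ((hsq 1).continuousAt.tendsto).mono_left nhdsWithin_le_nhds

lemma tendsto_klFun_div_sq {h : ℝ → ℝ} {d : ℝ} (hd : HasDerivAt h d 0) (h0 : h 0 = 1) :
    Tendsto (fun t ↦ InformationTheory.klFun (h t) / t ^ 2) (𝓝[≠] 0) (𝓝 (d ^ 2 / 2)) := by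
  have hext : ContinuousAt (Function.update
      (fun x : ℝ ↦ InformationTheory.klFun x / (x - 1) ^ 2) 1 (1 / 2)) 1 :=
    continuousAt_update_same.mpr tendsto_klFun_div_sub_one_sq
  have hh : Tendsto h (𝓝[≠] 0) (𝓝 1) := h0 ▸ hd.continuousAt.tendsto.mono_left nhdsWithin_le_nhds
  have hslope : Tendsto (fun t ↦ (h t - 1) / t) (𝓝[≠] 0) (𝓝 d) :=
    (hasDerivAt_iff_tendsto_slope.mp hd).congr fun t ↦ by rw [slope_def_field, h0, sub_zero]
  have hlim := (hext.tendsto.comp hh).mul (hslope.pow 2)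
  rw [Function.update_self, one_div_mul_eq_div] at hlim
  refine hlim.congr fun t ↦ ?_
  rcases eq_or_ne (h t) 1 with ht | ht
  · simp [ht, InformationTheory.klFun_one]
  · have : h t - 1 ≠ 0 := sub_ne_zero.mpr ht
    rw [Function.comp_apply, Function.update_of_ne ht]
    field_simp

lemma tendsto_klDiv_div_sq {Z : Type*} [Fintype Z] {q : ℝ → Z → ℝ} {q' : Z → ℝ}
    (hq : ∀ᶠ t in 𝓝[>] 0, IsDist (q t)) (hq0 : IsDist (q 0))
    (hAC : ∀ᶠ t in 𝓝[>] 0, AbsCont (q t) (q 0)) (hd : ∀ z, HasDerivAt (fun t ↦ q t z) (q' z) 0) :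
    Tendsto (fun t ↦ klDiv (q t) (q 0) / t ^ 2) (𝓝[>] 0) (𝓝 ((∑ z, q' z ^ 2 / q 0 z) / 2)) := by
  have hlim : Tendsto
      (fun t ↦ ∑ z, q 0 z * (InformationTheory.klFun (q t z / q 0 z) / t ^ 2)) (𝓝[>] 0)
      (𝓝 (∑ z, q 0 z * ((q' z / q 0 z) ^ 2 / 2))) := by
    refine tendsto_finsetSum _ fun z _ ↦ ?_
    rcases eq_or_ne (q 0 z) 0 with hz | hz
    · simp [hz]
    · exact ((tendsto_klFun_div_sq ((hd z).div_const _) (div_self hz)).mono_left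
        (nhdsGT_le_nhdsNE 0)).const_mul _
  have hvalue : ∑ z, q 0 z * ((q' z / q 0 z) ^ 2 / 2) = (∑ z, q' z ^ 2 / q 0 z) / 2 := by
    rw [sum_div]
    refine sum_congr rfl fun z _ ↦ ?_
    rcases eq_or_ne (q 0 z) 0 with hz | hz
    · simp [hz]
    · field_simp
  rw [← hvalue]
  refine hlim.congr' ?_
  filter_upwards [hq, hAC] with t ht htAC
  rw [klDiv_eq_sum_klFun ht hq0 htAC, sum_div]
  exact sum_congr rfl fun z _ ↦ mul_div_assoc' _ _ _

end SecondOrderDivergence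

section SparseInput

variable {K : ℕ} {ρ : Fin K → ℝ}

/-- The input laws of the random code: user `k` sends `1` with probability `t * ρ k`. -/
def scaledBern (ρ : Fin K → ℝ) (t : ℝ) (k : Fin K) : Bool → ℝ :=
  bern (t * ρ k)

lemma isDist_scaledBern (hρ : ∀ k, ρ k ∈ Set.Icc (0 : ℝ) 1) {t : ℝ} (ht : t ∈ Set.Icc (0 : ℝ) 1)
    (k : Fin K) : IsDist (scaledBern ρ t k) := by
  have hle : t * ρ k ≤ 1 := mul_le_one₀ ht.2 (hρ k).1 (hρ k).2
  refine ⟨Bool.forall_bool.mpr ⟨sub_nonneg.mpr hle, mul_nonneg ht.1 (hρ k).1⟩, ?_⟩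
  simp [scaledBern, bern]

lemma hasDerivAt_scaledBern (k : Fin K) (v : Bool) :
    HasDerivAt (fun t ↦ scaledBern ρ t k v) (if v then ρ k else -ρ k) 0 := by
  have h := (hasDerivAt_id (0 : ℝ)).mul_const (ρ k)
  cases v
  · simpa [scaledBern, bern] using h.const_sub 1
  · simpa [scaledBern, bern] using h

lemma scaledBern_zero (k : Fin K) (v : Bool) :
    scaledBern ρ 0 k v = if v = false then 1 else 0 := by
  cases v <;> simp [scaledBern, bern]

lemma prod_scaledBern_zero (s : Finset (Fin K)) (x : Fin K → Bool) :
    ∏ k ∈ s, scaledBern ρ 0 k (x k) = if ∀ k ∈ s, x k = false then 1 else 0 := by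
  simp only [scaledBern_zero, prod_ite_zero, prod_const_one]

lemma prodLaw_scaledBern_zero (x : Fin K → Bool) :
    prodLaw (scaledBern ρ 0) x = if x = xU ∅ then 1 else 0 := by
  simp [prodLaw, prod_scaledBern_zero, funext_iff, xU]

lemma sum_prodLaw_scaledBern_zero_mul (f : (Fin K → Bool) → ℝ) :
    ∑ x, prodLaw (scaledBern ρ 0) x * f x = f (xU ∅) := by
  simp [prodLaw_scaledBern_zero]

lemma sum_prod_scaledBern_zero_mul (k : Fin K) (f : (Fin K → Bool) → ℝ) :
    ∑ x, (∏ l ∈ univ.erase k, scaledBern ρ 0 l (x l)) * f x = f (xU {k}) + f (xU ∅) := by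
  have hsupport : ({x | ∀ l ∈ univ.erase k, x l = false} : Finset (Fin K → Bool)) =
      {xU {k}, xU ∅} := by
    ext x
    simp only [mem_filter_univ, mem_erase, mem_univ, and_true, mem_insert, mem_singleton,
      funext_iff, xU, notMem_empty, decide_false]
    constructor
    · intro hx
      cases hk : x k <;> [right; left] <;> intro l <;> rcases eq_or_ne l k with rfl | hl <;>
        simp_all
    · rintro (hx | hx) l hl <;> simp [hx, hl]
  have hne : xU {k} ≠ xU (∅ : Finset (Fin K)) := fun h ↦ by simpa [xU] using congrFun h k
  simp only [prod_scaledBern_zero, ite_mul, one_mul, zero_mul, ← sum_filter, hsupport,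
    sum_pair hne]

lemma hasDerivAt_prodLaw_scaledBern (x : Fin K → Bool) :
    HasDerivAt (fun t ↦ prodLaw (scaledBern ρ t) x)
      (∑ k, (∏ l ∈ univ.erase k, scaledBern ρ 0 l (x l)) * if x k then ρ k else -ρ k) 0 :=
  .fun_finsetProd fun k _ ↦ hasDerivAt_scaledBern k (x k)

lemma hasDerivAt_mul_of_eq_zero {f g : ℝ → ℝ} {f' a : ℝ} (hf : HasDerivAt f f' a)
    (hfa : f a = 0) (hg : ContinuousAt g a) : HasDerivAt (fun t ↦ f t * g t) (f' * g a) a := by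
  rw [hasDerivAt_iff_tendsto_slope] at hf ⊢
  refine (hf.mul (hg.tendsto.mono_left nhdsWithin_le_nhds)).congr fun t ↦ ?_
  rw [slope_def_field, slope_def_field, hfa, zero_mul, sub_zero, sub_zero, div_mul_eq_mul_div]

/- Inputs with two or more ones have probability `O(t²)`, so at first order only the all-zero input
and the inputs with a single one contribute. -/
lemma hasDerivAt_sum_prodLaw_scaledBern_mul {f : ℝ → (Fin K → Bool) → ℝ} {d : ℝ}
    (hf : ∀ x, ContinuousAt (fun t ↦ f t x) 0) (hd : HasDerivAt (fun t ↦ f t (xU ∅)) d 0) :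
    HasDerivAt (fun t ↦ ∑ x, prodLaw (scaledBern ρ t) x * f t x)
      (d + ∑ k, ρ k * (f 0 (xU {k}) - f 0 (xU ∅))) 0 := by
  have hterm (x : Fin K → Bool) : HasDerivAt (fun t ↦ prodLaw (scaledBern ρ t) x * f t x)
      ((∑ k, (∏ l ∈ univ.erase k, scaledBern ρ 0 l (x l)) * if x k then ρ k else -ρ k) * f 0 x +
        prodLaw (scaledBern ρ 0) x * d) 0 := by
    have hx := hasDerivAt_prodLaw_scaledBern (ρ := ρ) x
    rcases eq_or_ne x (xU ∅) with rfl | hne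
    · exact hx.mul hd
    · have hzero : prodLaw (scaledBern ρ 0) x = 0 := by rw [prodLaw_scaledBern_zero, if_neg hne]
      rw [hzero, zero_mul, add_zero]
      exact hasDerivAt_mul_of_eq_zero hx hzero (hf x)
  refine (HasDerivAt.fun_sum fun x _ ↦ hterm x).congr_deriv ?_
  simp only [sum_add_distrib, sum_mul, mul_assoc]
  rw [sum_prodLaw_scaledBern_zero_mul fun _ ↦ d, sum_comm, add_comm]
  congr 1
  refine sum_congr rfl fun k _ ↦ ?_
  rw [sum_prod_scaledBern_zero_mul k fun x ↦ (if x k then ρ k else -ρ k) * f 0 x]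
  simp only [xU, mem_singleton, decide_true, if_true, notMem_empty, decide_false,
    Bool.false_eq_true, if_false]
  ring

end SparseInput

section MomentDerivatives

variable {K : ℕ} {O : Type*} {ρ : Fin K → ℝ} {W : (Fin K → Bool) → O → ℝ}

/-- The likelihood ratio `W(· | x_{k}) / W(· | x_∅)` as a score for the symbol sent by user `k`; the
symbol `0` always scores `1`. -/
def likelihoodRatio (W : (Fin K → Bool) → O → ℝ) (k : Fin K) (v : Bool) (o : O) : ℝ :=
  if v then W (xU {k}) o / W (xU ∅) o else 1

lemma likelihoodRatio_nonneg (hW : ∀ x o, 0 ≤ W x o) (k : Fin K) (v : Bool) (o : O) :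
    0 ≤ likelihoodRatio W k v o := by
  rw [likelihoodRatio]
  split_ifs
  · exact div_nonneg (hW _ o) (hW _ o)
  · exact zero_le_one

lemma outputLaw_scaledBern_zero : outputLaw (scaledBern ρ 0) W = W (xU ∅) :=
  funext fun o ↦ sum_prodLaw_scaledBern_zero_mul fun x ↦ W x o

lemma averagedChannel_scaledBern_zero (T : Finset (Fin K)) (x : Fin K → Bool) :
    averagedChannel (scaledBern ρ 0) W T x = W (T.piecewise x (xU ∅)) :=
  outputLaw_scaledBern_zero

lemma hasDerivAt_outputLaw_scaledBern (o : O) :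
    HasDerivAt (fun t ↦ outputLaw (scaledBern ρ t) W o)
      (∑ k, ρ k * (W (xU {k}) o - W (xU ∅) o)) 0 :=
  (hasDerivAt_sum_prodLaw_scaledBern_mul (f := fun _ x ↦ W x o)
    (fun _ ↦ continuousAt_const) (hasDerivAt_const 0 _)).congr_deriv (zero_add _)

lemma sum_scaledBern_zero_mul_likelihoodRatio (k : Fin K) (o : O) :
    ∑ v, scaledBern ρ 0 k v * likelihoodRatio W k v o = 1 := by
  simp [scaledBern_zero, likelihoodRatio]

lemma piecewise_xU (T U : Finset (Fin K)) : T.piecewise (xU U) (xU ∅) = xU (T ∩ U) := by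
  ext k
  by_cases hk : k ∈ T <;> simp [xU, hk]

variable [Fintype O]

lemma missMoment_scaledBern_zero (hW : ∀ x, IsDist (W x)) (k : Fin K) (s : ℝ) :
    missMoment (scaledBern ρ 0) W k (likelihoodRatio W k) s = 1 := by
  rw [missMoment, sum_prodLaw_scaledBern_zero_mul]
  simp [xU, likelihoodRatio, (hW _).sum_eq_one]

lemma hasDerivAt_missMoment_scaledBern (hW : ∀ x, IsDist (W x)) (k : Fin K) (s : ℝ) :
    HasDerivAt (fun t ↦ missMoment (scaledBern ρ t) W k (likelihoodRatio W k) s)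
      (ρ k * (∑ o, W (xU {k}) o * (W (xU {k}) o / W (xU ∅) o)⁻¹ ^ s - 1)) 0 := by
  refine (hasDerivAt_sum_prodLaw_scaledBern_mul
    (f := fun _ x ↦ ∑ o, W x o * (likelihoodRatio W k (x k) o)⁻¹ ^ s)
    (fun _ ↦ continuousAt_const) (hasDerivAt_const 0 _)).congr_deriv ?_
  rw [zero_add, sum_eq_single k (fun l _ hl ↦ ?_) (by simp)]
  · simp [xU, likelihoodRatio, (hW _).sum_eq_one]
  · simp [xU, likelihoodRatio, (hW _).sum_eq_one, hl.symm]

lemma sum_mul_sum_scaledBern_mul_likelihoodRatio (hW : ∀ x, IsDist (W x)) {k : Fin K}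
    (hAC : AbsCont (W (xU {k})) (W (xU ∅))) (t : ℝ) :
    ∑ o, W (xU ∅) o * ∑ v, scaledBern ρ t k v * likelihoodRatio W k v o = 1 := by
  have hmix (o : O) : W (xU ∅) o * ∑ v, scaledBern ρ t k v * likelihoodRatio W k v o =
      (1 - t * ρ k) * W (xU ∅) o + t * ρ k * W (xU {k}) o := by
    simp only [Fintype.sum_bool, scaledBern, bern, likelihoodRatio, if_true, Bool.false_eq_true,
      if_false]
    rcases eq_or_ne (W (xU ∅) o) 0 with ho | ho
    · simp [ho, hAC o ho]
    · field_simp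
      ring
  simp only [hmix, sum_add_distrib, ← mul_sum, (hW _).sum_eq_one]
  ring

lemma falseAlarmMoment_scaledBern_zero (hW : ∀ x, IsDist (W x)) (k : Fin K) :
    falseAlarmMoment (scaledBern ρ 0) W k (likelihoodRatio W k) = 1 := by
  simp only [falseAlarmMoment, sum_scaledBern_zero_mul_likelihoodRatio, mul_one,
    outputLaw_scaledBern_zero, (hW _).sum_eq_one]

lemma hasDerivAt_falseAlarmMoment_scaledBern (hW : ∀ x, IsDist (W x)) {k : Fin K}
    (hAC : AbsCont (W (xU {k})) (W (xU ∅))) :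
    HasDerivAt (fun t ↦ falseAlarmMoment (scaledBern ρ t) W k (likelihoodRatio W k)) 0 0 := by
  simp only [falseAlarmMoment_eq_sum_prodLaw_mul]
  refine (hasDerivAt_sum_prodLaw_scaledBern_mul (fun x ↦ ?_) (d := 0) ?_).congr_deriv ?_
  · exact tendsto_finsetSum _ fun o _ ↦ .const_mul _ <| tendsto_finsetSum _ fun v _ ↦
      .mul_const _ (hasDerivAt_scaledBern k v).continuousAt.tendsto
  · simp only [sum_mul_sum_scaledBern_mul_likelihoodRatio hW hAC]
    exact hasDerivAt_const 0 1
  · simp only [sum_scaledBern_zero_mul_likelihoodRatio, mul_one, (hW _).sum_eq_one, sub_self,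
      mul_zero, sum_const_zero, add_zero]

/-- The contribution of the input `x` to `infoMoment p W T s`. -/
def conditionalInfoMoment {ι X : Type*} [Fintype ι] [DecidableEq ι] [Fintype X] (p : ι → X → ℝ)
    (W : (ι → X) → O → ℝ) (T : Finset ι) (s : ℝ) (x : ι → X) : ℝ :=
  ∑ o, W x o * (averagedChannel p W T x o / outputLaw p W o) ^ s

lemma conditionalInfoMoment_scaledBern_zero (T U : Finset (Fin K)) (s : ℝ) :
    conditionalInfoMoment (scaledBern ρ 0) W T s (xU U) =
      ∑ o, W (xU U) o * (W (xU (T ∩ U)) o / W (xU ∅) o) ^ s := by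
  simp only [conditionalInfoMoment, averagedChannel_scaledBern_zero, outputLaw_scaledBern_zero,
    piecewise_xU]

lemma conditionalInfoMoment_scaledBern_zero_of_disjoint (hW : ∀ x, IsDist (W x))
    (hAC : ∀ x, AbsCont (W x) (W (xU ∅))) {T U : Finset (Fin K)} (hTU : Disjoint T U) (s : ℝ) :
    conditionalInfoMoment (scaledBern ρ 0) W T s (xU U) = 1 := by
  rw [conditionalInfoMoment_scaledBern_zero, disjoint_iff_inter_eq_empty.mp hTU,
    ← (hW (xU U)).sum_eq_one]
  refine sum_congr rfl fun o _ ↦ ?_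
  rcases eq_or_ne (W (xU ∅) o) 0 with ho | ho
  · rw [hAC (xU U) o ho, zero_mul]
  · rw [div_self ho, Real.one_rpow, mul_one]

lemma continuousAt_conditionalInfoMoment_scaledBern (hAC : ∀ x, AbsCont (W x) (W (xU ∅)))
    (T : Finset (Fin K)) {s : ℝ} (hs : 0 ≤ s) (x : Fin K → Bool) :
    ContinuousAt (fun t ↦ conditionalInfoMoment (scaledBern ρ t) W T s x) 0 := by
  refine tendsto_finsetSum _ fun o _ ↦ ?_
  rcases eq_or_ne (W (xU ∅) o) 0 with ho | ho
  · simp only [hAC x o ho, zero_mul, tendsto_const_nhds]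
  · have hratio : ContinuousAt (fun t ↦
        averagedChannel (scaledBern ρ t) W T x o / outputLaw (scaledBern ρ t) W o) 0 :=
      (hasDerivAt_outputLaw_scaledBern o).continuousAt.div
        (hasDerivAt_outputLaw_scaledBern o).continuousAt (by rwa [outputLaw_scaledBern_zero])
    exact (hratio.rpow_const (.inr hs)).const_mul _

lemma hasDerivAt_mul_ratio_rpow {a b : ℝ → ℝ} {a' b' c x : ℝ} (ha : HasDerivAt a a' x)
    (hb : HasDerivAt b b' x) (hax : a x = c) (hbx : b x = c) (hc : c ≠ 0) (s : ℝ) :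
    HasDerivAt (fun t ↦ c * (a t / b t) ^ s) (s * (a' - b')) x := by
  have hone : a x / b x = 1 := by rw [hax, hbx, div_self hc]
  refine (((ha.fun_div hb (hbx.trans_ne hc)).rpow_const (p := s)
    (.inl (hone.trans_ne one_ne_zero))).const_mul c).congr_deriv ?_
  rw [hone, hax, hbx, Real.one_rpow]
  field_simp

lemma sum_sum_mul_sub_eq_zero {κ : Type*} [Fintype κ] {P Q : κ → O → ℝ} (hP : ∀ k, IsDist (P k))
    (hQ : ∀ k, IsDist (Q k)) (c : κ → ℝ) : ∑ o, ∑ k, c k * (P k o - Q k o) = 0 := by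
  rw [Finset.sum_comm]
  simp only [← mul_sum, sum_sub_distrib, (hP _).sum_eq_one, (hQ _).sum_eq_one, sub_self, mul_zero,
    sum_const_zero]

lemma hasDerivAt_conditionalInfoMoment_scaledBern_xU_empty (hW : ∀ x, IsDist (W x))
    (hAC : ∀ x, AbsCont (W x) (W (xU ∅))) (T : Finset (Fin K)) (s : ℝ) :
    HasDerivAt (fun t ↦ conditionalInfoMoment (scaledBern ρ t) W T s (xU ∅)) 0 0 := by
  set a' : O → ℝ := fun o ↦
    ∑ k, ρ k * (W (T.piecewise (xU ∅) (xU {k})) o - W (T.piecewise (xU ∅) (xU ∅)) o)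
  set b' : O → ℝ := fun o ↦ ∑ k, ρ k * (W (xU {k}) o - W (xU ∅) o)
  have hterm (o : O) : HasDerivAt (fun t ↦ W (xU ∅) o * (averagedChannel (scaledBern ρ t) W T
      (xU ∅) o / outputLaw (scaledBern ρ t) W o) ^ s) (s * (a' o - b' o)) 0 := by
    rcases eq_or_ne (W (xU ∅) o) 0 with ho | ho
    · have hW0 (x : Fin K → Bool) : W x o = 0 := hAC x o ho
      simpa only [a', b', hW0, zero_mul, sub_self, mul_zero, sum_const_zero] using
        hasDerivAt_const (0 : ℝ) (0 : ℝ)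
    · refine hasDerivAt_mul_ratio_rpow (hasDerivAt_outputLaw_scaledBern o)
        (hasDerivAt_outputLaw_scaledBern o) ?_ (congrFun outputLaw_scaledBern_zero o) ho s
      rw [outputLaw_scaledBern_zero, piecewise_same]
  refine (HasDerivAt.fun_sum fun o _ ↦ hterm o).congr_deriv ?_
  rw [← mul_sum, sum_sub_distrib, sum_sum_mul_sub_eq_zero (fun _ ↦ hW _) (fun _ ↦ hW _),
    sum_sum_mul_sub_eq_zero (fun _ ↦ hW _) (fun _ ↦ hW _), sub_zero, mul_zero]

lemma infoMoment_scaledBern_zero (hW : ∀ x, IsDist (W x)) (hAC : ∀ x, AbsCont (W x) (W (xU ∅)))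
    (T : Finset (Fin K)) (s : ℝ) : infoMoment (scaledBern ρ 0) W T s = 1 :=
  (sum_prodLaw_scaledBern_zero_mul _).trans
    (conditionalInfoMoment_scaledBern_zero_of_disjoint hW hAC (disjoint_empty_right T) s)

lemma hasDerivAt_infoMoment_scaledBern (hW : ∀ x, IsDist (W x))
    (hAC : ∀ x, AbsCont (W x) (W (xU ∅))) (T : Finset (Fin K)) {s : ℝ} (hs : 0 ≤ s) :
    HasDerivAt (fun t ↦ infoMoment (scaledBern ρ t) W T s)
      (∑ k ∈ T, ρ k * (∑ o, W (xU {k}) o * (W (xU {k}) o / W (xU ∅) o) ^ s - 1)) 0 := by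
  refine (hasDerivAt_sum_prodLaw_scaledBern_mul
    (continuousAt_conditionalInfoMoment_scaledBern hAC T hs)
    (hasDerivAt_conditionalInfoMoment_scaledBern_xU_empty hW hAC T s)).congr_deriv ?_
  rw [zero_add, conditionalInfoMoment_scaledBern_zero_of_disjoint hW hAC (disjoint_empty_right T),
    ← sum_subset (subset_univ T)]
  · refine sum_congr rfl fun k hk ↦ ?_
    rw [conditionalInfoMoment_scaledBern_zero, inter_singleton_of_mem hk]
  · intro k _ hk
    rw [conditionalInfoMoment_scaledBern_zero_of_disjoint hW hAC (disjoint_singleton_right.mpr hk),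
      sub_self, mul_zero]

end MomentDerivatives

section Scale

/-- The sparsity `n ^ (-3/4)` of the random codewords of block length `n`: their expected weights
are of order `n ^ (1/4)`. -/
def inputScale (n : ℕ) : ℝ :=
  (n : ℝ) ^ (-(3 / 4) : ℝ)

lemma inputScale_pos {n : ℕ} (hn : 1 ≤ n) : 0 < inputScale n :=
  Real.rpow_pos_of_pos (by exact_mod_cast hn) _

lemma inputScale_mem_Icc (n : ℕ) : inputScale n ∈ Set.Icc (0 : ℝ) 1 := by
  refine ⟨Real.rpow_nonneg n.cast_nonneg _, ?_⟩
  rcases n.eq_zero_or_pos with rfl | hn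
  · norm_num [inputScale]
  · exact Real.rpow_le_one_of_one_le_of_nonpos (by exact_mod_cast hn) (by norm_num)

lemma natCast_mul_inputScale (n : ℕ) : n * inputScale n = (n : ℝ) ^ (1 / 4 : ℝ) := by
  rw [inputScale, mul_comm, ← Real.rpow_add_one' n.cast_nonneg (by norm_num)]
  norm_num

lemma natCast_mul_inputScale_nonneg (n : ℕ) : 0 ≤ n * inputScale n :=
  mul_nonneg n.cast_nonneg (inputScale_mem_Icc n).1

lemma one_le_natCast_mul_inputScale {n : ℕ} (hn : 1 ≤ n) : 1 ≤ n * inputScale n := by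
  rw [natCast_mul_inputScale]
  exact Real.one_le_rpow (by exact_mod_cast hn) (by norm_num)

lemma tendsto_inputScale : Tendsto inputScale atTop (𝓝[>] 0) :=
  tendsto_nhdsWithin_iff.mpr
    ⟨(tendsto_rpow_neg_atTop (by norm_num)).comp tendsto_natCast_atTop_atTop,
      (eventually_ge_atTop 1).mono fun _ ↦ inputScale_pos⟩

lemma tendsto_natCast_mul_inputScale : Tendsto (fun n : ℕ ↦ n * inputScale n) atTop atTop := by
  simp only [natCast_mul_inputScale]
  exact (tendsto_rpow_atTop (by norm_num)).comp tendsto_natCast_atTop_atTop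

lemma tendsto_natCast_mul_inputScale_sq :
    Tendsto (fun n : ℕ ↦ n * inputScale n ^ 2) atTop (𝓝 0) := by
  refine ((tendsto_rpow_neg_atTop (y := 1 / 2) (by norm_num)).comp
    tendsto_natCast_atTop_atTop).congr' ?_
  filter_upwards [eventually_ge_atTop 1] with n hn
  rw [pow_two, ← mul_assoc, natCast_mul_inputScale, inputScale, Function.comp_apply,
    ← Real.rpow_add (by exact_mod_cast hn)]
  norm_num

lemma tendsto_pow_four_mul_exp_neg_mul {c : ℝ} (hc : 0 < c) :
    Tendsto (fun n : ℕ ↦ (n : ℝ) ^ 4 * Real.exp (-c * (n * inputScale n))) atTop (𝓝 0) := by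
  refine ((tendsto_rpow_mul_exp_neg_mul_atTop_nhds_zero 16 c hc).comp
    tendsto_natCast_mul_inputScale).congr fun n ↦ ?_
  have hpow : ((n : ℝ) ^ (1 / 4 : ℝ)) ^ (16 : ℝ) = (n : ℝ) ^ 4 := by
    rw [← Real.rpow_mul n.cast_nonneg, ← Real.rpow_natCast]
    norm_num
  rw [Function.comp_apply, natCast_mul_inputScale, hpow]

lemma eventually_lt_add_mul_of_hasDerivAt {f : ℝ → ℝ} {d c : ℝ} (hf : HasDerivAt f d 0)
    (hdc : d < c) :
    ∀ᶠ t in 𝓝[>] 0, f t < f 0 + t * c := by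
  have hslope := (hasDerivAt_iff_tendsto_slope_zero.mp hf).mono_left (nhdsGT_le_nhdsNE 0)
  filter_upwards [hslope.eventually_lt_const hdc, self_mem_nhdsWithin] with t ht ht0
  rw [zero_add, smul_eq_mul, inv_mul_lt_iff₀ ht0] at ht
  linarith

lemma tendsto_pow_four_mul_mul_pow {G : ℝ → ℝ} {D e C : ℝ} {w : ℕ → ℝ} (hG : HasDerivAt G D 0)
    (hG0 : G 0 = 1) (hG_nonneg : ∀ n, 0 ≤ G (inputScale n)) (hw_nonneg : ∀ n, 0 ≤ w n)
    (hw : ∀ n, w n ≤ C * Real.exp (n * inputScale n * e)) (hDe : D + e < 0) :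
    Tendsto (fun n : ℕ ↦ (n : ℝ) ^ 4 * (w n * G (inputScale n) ^ n)) atTop (𝓝 0) := by
  obtain ⟨κ, hDκ, hκe⟩ := exists_between (lt_neg_iff_add_neg.mpr hDe)
  have hlim := (tendsto_pow_four_mul_exp_neg_mul
    (neg_pos.mpr (lt_neg_iff_add_neg.mp hκe))).const_mul C
  rw [mul_zero] at hlim
  refine squeeze_zero' (.of_forall fun n ↦ mul_nonneg (by positivity)
    (mul_nonneg (hw_nonneg n) (pow_nonneg (hG_nonneg n) n))) ?_ hlim
  filter_upwards [tendsto_inputScale.eventually (eventually_lt_add_mul_of_hasDerivAt hG hDκ)]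
    with n hn
  have hGexp : G (inputScale n) ≤ Real.exp (inputScale n * κ) :=
    hn.le.trans (by rw [hG0, add_comm]; exact Real.add_one_le_exp _)
  calc (n : ℝ) ^ 4 * (w n * G (inputScale n) ^ n)
      ≤ (n : ℝ) ^ 4 * (C * Real.exp (n * inputScale n * e) * Real.exp (inputScale n * κ) ^ n) := by
        have hC : 0 ≤ C * Real.exp (n * inputScale n * e) := (hw_nonneg n).trans (hw n)
        gcongr
        · exact pow_nonneg (hG_nonneg n) n
        · exact hw n
        · exact hG_nonneg n
    _ = C * ((n : ℝ) ^ 4 * Real.exp (- -(κ + e) * (n * inputScale n))) := by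
        rw [← Real.exp_nat_mul, mul_assoc C, ← Real.exp_add, mul_left_comm]
        ring_nf

lemma tendsto_mul_pow {G : ℝ → ℝ} {D e C : ℝ} {w : ℕ → ℝ} (hG : HasDerivAt G D 0)
    (hG0 : G 0 = 1) (hG_nonneg : ∀ n, 0 ≤ G (inputScale n)) (hw_nonneg : ∀ n, 0 ≤ w n)
    (hw : ∀ n, w n ≤ C * Real.exp (n * inputScale n * e)) (hDe : D + e < 0) :
    Tendsto (fun n : ℕ ↦ w n * G (inputScale n) ^ n) atTop (𝓝 0) := by
  have hterm_nonneg (n : ℕ) : 0 ≤ w n * G (inputScale n) ^ n :=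
    mul_nonneg (hw_nonneg n) (pow_nonneg (hG_nonneg n) n)
  refine squeeze_zero' (.of_forall hterm_nonneg) ?_
    (tendsto_pow_four_mul_mul_pow hG hG0 hG_nonneg hw_nonneg hw hDe)
  filter_upwards [eventually_ge_atTop 1] with n hn
  exact le_mul_of_one_le_left (hterm_nonneg n) (one_le_pow₀ (by exact_mod_cast hn))

/-- The number of messages or keys of exponential rate `r` relative to the order
`n * inputScale n` of the codeword weights. -/
def codeSize (r : ℝ) (n : ℕ) : ℕ :=
  ⌈Real.exp (n * inputScale n * r)⌉₊

instance (r : ℝ) (n : ℕ) : NeZero (codeSize r n) :=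
  ⟨(Nat.ceil_pos.mpr (Real.exp_pos _)).ne'⟩

lemma codeSize_zero (n : ℕ) : codeSize 0 n = 1 := by
  simp [codeSize]

lemma exp_le_codeSize (r : ℝ) (n : ℕ) : Real.exp (n * inputScale n * r) ≤ codeSize r n :=
  Nat.le_ceil _

lemma codeSize_le {r : ℝ} (hr : 0 ≤ r) (n : ℕ) :
    codeSize r n ≤ 2 * Real.exp (n * inputScale n * r) := by
  have hlt := Nat.ceil_lt_add_one (Real.exp_pos (n * inputScale n * r)).le
  have hone := Real.one_le_exp (mul_nonneg (natCast_mul_inputScale_nonneg n) hr)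
  rw [codeSize]
  linarith

lemma tendsto_log_codeSize_div {r : ℝ} (hr : 0 ≤ r) :
    Tendsto (fun n : ℕ ↦ Real.log (codeSize r n) / (n * inputScale n)) atTop (𝓝 r) := by
  have hupper : Tendsto (fun n : ℕ ↦ r + Real.log 2 / (n * inputScale n)) atTop (𝓝 r) := by
    simpa using (tendsto_natCast_mul_inputScale.const_div_atTop (Real.log 2)).const_add r
  refine tendsto_of_tendsto_of_tendsto_of_le_of_le' tendsto_const_nhds hupper ?_ ?_
  all_goals
    filter_upwards [eventually_ge_atTop 1] with n hn
    have hscale : 0 < n * inputScale n := one_pos.trans_le (one_le_natCast_mul_inputScale hn)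
    have hsize : (0 : ℝ) < codeSize r n := Nat.cast_pos.mpr (NeZero.pos _)
  · rw [le_div_iff₀ hscale, Real.le_log_iff_exp_le hsize, mul_comm]
    exact exp_le_codeSize r n
  · have hlog := Real.log_le_log hsize (codeSize_le hr n)
    rw [Real.log_mul two_ne_zero (Real.exp_ne_zero _), Real.log_exp] at hlog
    rw [div_le_iff₀ hscale, add_mul, div_mul_cancel₀ _ hscale.ne']
    linarith

end Scale

section Exponents

variable {K : ℕ} {O : Type*} {ρ : Fin K → ℝ} {W : (Fin K → Bool) → O → ℝ}

lemma ratio_pos_of_absCont {P Q : O → ℝ} (hP : ∀ o, 0 ≤ P o) (hQ : ∀ o, 0 ≤ Q o)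
    (hPQ : AbsCont P Q) {o : O} (ho : P o ≠ 0) : 0 < P o / Q o :=
  div_pos ((hP o).lt_of_ne' ho) ((hQ o).lt_of_ne' fun h ↦ ho (hPQ o h))

variable [Fintype O]

lemma hasDerivAt_sum_mul_rpow {P a : O → ℝ} (ha : ∀ o, P o ≠ 0 → 0 < a o) :
    HasDerivAt (fun s : ℝ ↦ ∑ o, P o * a o ^ s) (∑ o, P o * Real.log (a o)) 0 := by
  refine HasDerivAt.fun_sum fun o _ ↦ ?_
  rcases eq_or_ne (P o) 0 with ho | ho
  · simpa only [ho, zero_mul] using hasDerivAt_const (0 : ℝ) (0 : ℝ)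
  · simpa using ((hasDerivAt_id (0 : ℝ)).const_rpow (ha o ho)).const_mul (P o)

lemma hasDerivAt_sum_mul_ratio_rpow {P Q : O → ℝ} (hP : ∀ o, 0 ≤ P o) (hQ : ∀ o, 0 ≤ Q o)
    (hPQ : AbsCont P Q) :
    HasDerivAt (fun s : ℝ ↦ ∑ o, P o * (P o / Q o) ^ s) (klDiv P Q) 0 :=
  hasDerivAt_sum_mul_rpow fun _ ↦ ratio_pos_of_absCont hP hQ hPQ

lemma hasDerivAt_sum_mul_inv_ratio_rpow {P Q : O → ℝ} (hP : ∀ o, 0 ≤ P o) (hQ : ∀ o, 0 ≤ Q o)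
    (hPQ : AbsCont P Q) :
    HasDerivAt (fun s : ℝ ↦ ∑ o, P o * (P o / Q o)⁻¹ ^ s) (-klDiv P Q) 0 :=
  (hasDerivAt_sum_mul_rpow fun _ ho ↦
    inv_pos.mpr (ratio_pos_of_absCont hP hQ hPQ ho)).congr_deriv (by
      simp only [Real.log_inv, mul_neg, sum_neg_distrib, klDiv])

lemma exists_tendsto_missMoment_pow (hρ : ∀ k, ρ k ∈ Set.Icc (0 : ℝ) 1)
    (hW : ∀ x, IsDist (W x)) {k : Fin K} (hAC : AbsCont (W (xU {k})) (W (xU ∅))) {κ : ℝ}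
    (hκ : κ < ρ k * klDiv (W (xU {k})) (W (xU ∅))) :
    ∃ s, 0 < s ∧ Tendsto (fun n : ℕ ↦ Real.exp (n * inputScale n * κ) ^ s *
      missMoment (scaledBern ρ (inputScale n)) W k (likelihoodRatio W k) s ^ n) atTop (𝓝 0) := by
  have hW_nonneg (x : Fin K → Bool) (o : O) : 0 ≤ W x o := (hW x).nonneg o
  have hexponent := ((hasDerivAt_sum_mul_inv_ratio_rpow (hW _).nonneg (hW _).nonneg hAC).const_mul
    (ρ k)).fun_add ((hasDerivAt_id 0).mul_const κ)
  obtain ⟨s, hs, hs0⟩ := ((eventually_lt_add_mul_of_hasDerivAt (c := 0) hexponent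
    (by linarith)).and self_mem_nhdsWithin).exists
  simp only [id, Real.rpow_zero, mul_one, (hW _).sum_eq_one, zero_mul, mul_zero, add_zero] at hs
  have hMoment_nonneg (n : ℕ) :
      0 ≤ missMoment (scaledBern ρ (inputScale n)) W k (likelihoodRatio W k) s :=
    missMoment_nonneg (fun k ↦ (isDist_scaledBern hρ (inputScale_mem_Icc n) k).nonneg) hW_nonneg k
      (likelihoodRatio_nonneg hW_nonneg k) s
  refine ⟨s, hs0, tendsto_mul_pow (C := 1) (e := s * κ)
    (G := fun t ↦ missMoment (scaledBern ρ t) W k (likelihoodRatio W k) s)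
    (w := fun n ↦ Real.exp (n * inputScale n * κ) ^ s) (hasDerivAt_missMoment_scaledBern hW k s)
    (missMoment_scaledBern_zero hW k s) hMoment_nonneg
    (fun n ↦ Real.rpow_nonneg (Real.exp_pos _).le s) (fun n ↦ ?_) (by linarith)⟩
  rw [one_mul, ← Real.exp_mul, mul_assoc, mul_comm κ]

lemma tendsto_falseAlarmMoment_pow (hρ : ∀ k, ρ k ∈ Set.Icc (0 : ℝ) 1) (hW : ∀ x, IsDist (W x))
    {k : Fin K} (hAC : AbsCont (W (xU {k})) (W (xU ∅))) {r κ : ℝ} (hr : 0 ≤ r) (hrκ : r < κ) :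
    Tendsto (fun n : ℕ ↦ codeSize r n * ((Real.exp (n * inputScale n * κ))⁻¹ *
      falseAlarmMoment (scaledBern ρ (inputScale n)) W k (likelihoodRatio W k) ^ n))
      atTop (𝓝 0) := by
  have hW_nonneg (x : Fin K → Bool) (o : O) : 0 ≤ W x o := (hW x).nonneg o
  simp only [← mul_assoc]
  refine tendsto_mul_pow (C := 2) (e := r - κ) (hasDerivAt_falseAlarmMoment_scaledBern hW hAC)
    (falseAlarmMoment_scaledBern_zero hW k) (fun n ↦ falseAlarmMoment_nonneg ?_ hW_nonneg k
      (likelihoodRatio_nonneg hW_nonneg k)) (fun n ↦ by positivity) (fun n ↦ ?_) (by linarith)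
  · exact fun k ↦ (isDist_scaledBern hρ (inputScale_mem_Icc n) k).nonneg
  · rw [mul_sub, Real.exp_sub, div_eq_mul_inv, ← mul_assoc]
    gcongr
    exact codeSize_le hr n

lemma exists_sum_mul_ratio_rpow_lt (hW : ∀ x, IsDist (W x))
    (hAC : ∀ x, AbsCont (W x) (W (xU ∅))) {A : Finset (Fin K)} {R : Fin K → ℝ}
    (hR : ∀ k ∈ A, ρ k * klDiv (W (xU {k})) (W (xU ∅)) < R k) :
    ∃ s, 0 < s ∧ s ≤ 1 ∧ ∀ k ∈ A,
      ρ k * (∑ o, W (xU {k}) o * (W (xU {k}) o / W (xU ∅) o) ^ s - 1) < s * R k := by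
  have hexponent (k : Fin K) (hk : k ∈ A) := eventually_lt_add_mul_of_hasDerivAt
    ((hasDerivAt_sum_mul_ratio_rpow (hW (xU {k})).nonneg (hW _).nonneg (hAC _)).const_mul (ρ k))
    (hR k hk)
  obtain ⟨s, hs, hs01⟩ := (((eventually_all_finset A).mpr hexponent).and
    (Ioc_mem_nhdsGT one_pos)).exists
  refine ⟨s, hs01.1, hs01.2, fun k hk ↦ ?_⟩
  have hsk := hs k hk
  simp only [Real.rpow_zero, mul_one, (hW _).sum_eq_one] at hsk
  linarith

lemma tendsto_pow_four_mul_infoMoment_pow (hρ : ∀ k, ρ k ∈ Set.Icc (0 : ℝ) 1)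
    (hW : ∀ x, IsDist (W x)) (hAC : ∀ x, AbsCont (W x) (W (xU ∅))) {T : Finset (Fin K)}
    (hT : T.Nonempty) {s : ℝ} (hs : 0 ≤ s) {R : Fin K → ℝ} (hR : ∀ k ∈ T,
      ρ k * (∑ o, W (xU {k}) o * (W (xU {k}) o / W (xU ∅) o) ^ s - 1) < s * R k)
    {N : ℕ → Fin K → ℝ} (hN : ∀ n k, Real.exp (n * inputScale n * R k) ≤ N n k) :
    Tendsto (fun n : ℕ ↦ (n : ℝ) ^ 4 * ((∏ k ∈ T, (N n k)⁻¹) ^ s *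
      infoMoment (scaledBern ρ (inputScale n)) W T s ^ n)) atTop (𝓝 0) := by
  have hN_pos (n : ℕ) (k : Fin K) : 0 < N n k := (Real.exp_pos _).trans_le (hN n k)
  have hprod_nonneg (n : ℕ) : 0 ≤ ∏ k ∈ T, (N n k)⁻¹ :=
    prod_nonneg fun k _ ↦ (inv_pos.mpr (hN_pos n k)).le
  refine tendsto_pow_four_mul_mul_pow (C := 1) (e := -∑ k ∈ T, s * R k)
    (G := fun t ↦ infoMoment (scaledBern ρ t) W T s) (w := fun n ↦ (∏ k ∈ T, (N n k)⁻¹) ^ s)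
    (hasDerivAt_infoMoment_scaledBern hW hAC T hs) (infoMoment_scaledBern_zero hW hAC T s)
    (fun n ↦ infoMoment_nonneg (fun k ↦ (isDist_scaledBern hρ (inputScale_mem_Icc n) k).nonneg)
      (fun x ↦ (hW x).nonneg) T s) (fun n ↦ Real.rpow_nonneg (hprod_nonneg n) s) (fun n ↦ ?_)
    (by linarith [sum_lt_sum_of_nonempty hT hR])
  calc (∏ k ∈ T, (N n k)⁻¹) ^ s
      ≤ (∏ k ∈ T, Real.exp (-(n * inputScale n * R k))) ^ s := by
        refine Real.rpow_le_rpow (hprod_nonneg n) (prod_le_prod (fun k _ ↦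
          (inv_pos.mpr (hN_pos n k)).le) fun k _ ↦ ?_) hs
        rw [Real.exp_neg]
        exact inv_anti₀ (Real.exp_pos _) (hN n k)
    _ = 1 * Real.exp (n * inputScale n * -∑ k ∈ T, s * R k) := by
        rw [← Real.exp_sum, ← Real.exp_mul, sum_neg_distrib, ← mul_sum, ← mul_sum, one_mul]
        ring_nf

end Exponents

section CodeSequences

lemma exists_tendsto_zero_of_eventually_add_le {E : ℕ → Type*} [∀ n, Nonempty (E n)]
    {f g : ∀ n, E n → ℝ} {b : ℕ → ℝ} (hf : ∀ᶠ n in atTop, ∀ e, 0 ≤ f n e)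
    (hg : ∀ᶠ n in atTop, ∀ e, 0 ≤ g n e) (hfg : ∀ᶠ n in atTop, ∃ e, f n e + g n e ≤ b n)
    (hb : Tendsto b atTop (𝓝 0)) :
    ∃ e : ∀ n, E n, Tendsto (fun n ↦ f n (e n)) atTop (𝓝 0) ∧
      Tendsto (fun n ↦ g n (e n)) atTop (𝓝 0) := by
  have hchoice (n : ℕ) : ∃ e, (∃ e', f n e' + g n e' ≤ b n) → f n e + g n e ≤ b n :=
    (exists_or_forall_not fun e ↦ f n e + g n e ≤ b n).elim (fun ⟨e, he⟩ ↦ ⟨e, fun _ ↦ he⟩)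
      fun h ↦ ⟨Classical.arbitrary _, fun ⟨e, he⟩ ↦ absurd he (h e)⟩
  choose e he using hchoice
  refine ⟨e, squeeze_zero' (hf.mono fun n h ↦ h _) ?_ hb,
    squeeze_zero' (hg.mono fun n h ↦ h _) ?_ hb⟩
  all_goals
    filter_upwards [hf, hg, hfg] with n hfn hgn hn
    linarith [hfn (e n), hgn (e n), he n hn]

variable {K : ℕ}

section

variable {O : Type*} {ρ : Fin K → ℝ} {W : (Fin K → Bool) → O → ℝ}

lemma xU_filter (x : Fin K → Bool) : xU (univ.filter fun k ↦ x k = true) = x := by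
  ext k
  simp [xU]

lemma eq_zero_of_likelihoodRatio_eq_zero (hAC : ∀ U : Finset (Fin K), U.Nonempty → ∀ k ∈ U,
      AbsCont (W (xU U)) (W (xU {k})) ∧ AbsCont (W (xU {k})) (W (xU ∅)))
    {x : Fin K → Bool} {k : Fin K} {o : O} (h : likelihoodRatio W k (x k) o = 0) :
    W x o = 0 := by
  rcases hx : x k with _ | _
  · simp [likelihoodRatio, hx] at h
  have hk : k ∈ univ.filter fun k ↦ x k = true := by simpa using hx
  obtain ⟨hUk, hk0⟩ := hAC _ ⟨k, hk⟩ k hk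
  rw [likelihoodRatio, hx, if_pos rfl, div_eq_zero_iff] at h
  rw [← xU_filter x]
  exact hUk o (h.elim id (hk0 o))

lemma tendsto_outputLaw_scaledBern (ρ : Fin K → ℝ) (W : (Fin K → Bool) → O → ℝ) (o : O) :
    Tendsto (fun t ↦ outputLaw (scaledBern ρ t) W o) (𝓝[>] 0) (𝓝 (W (xU ∅) o)) := by
  have hcont := (hasDerivAt_outputLaw_scaledBern (ρ := ρ) (W := W) o).continuousAt.tendsto
  rw [outputLaw_scaledBern_zero] at hcont
  exact hcont.mono_left nhdsWithin_le_nhds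

lemma eventually_absCont_outputLaw [Finite O] (ρ : Fin K → ℝ)
    (hAC : ∀ x, AbsCont (W x) (W (xU ∅))) :
    ∀ᶠ t in 𝓝[>] 0, ∀ x, AbsCont (W x) (outputLaw (scaledBern ρ t) W) := by
  have hne : ∀ᶠ t in 𝓝[>] 0, ∀ o, W (xU ∅) o ≠ 0 → outputLaw (scaledBern ρ t) W o ≠ 0 :=
    eventually_all.mpr fun o ↦ eventually_imp_distrib_left.mpr
      (tendsto_outputLaw_scaledBern ρ W o).eventually_ne
  filter_upwards [hne] with t ht x o ho
  exact hAC x o (not_not.mp fun h ↦ ht o h ho)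

lemma eventually_abs_log_outputLaw_div_le [Finite O] (ρ : Fin K → ℝ)
    (W : (Fin K → Bool) → O → ℝ) :
    ∀ᶠ t in 𝓝[>] 0, ∀ o, |Real.log (outputLaw (scaledBern ρ t) W o / W (xU ∅) o)| ≤ 1 := by
  refine eventually_all.mpr fun o ↦ ?_
  rcases eq_or_ne (W (xU ∅) o) 0 with ho | ho
  · simp [ho]
  have hlog := (((tendsto_outputLaw_scaledBern ρ W o).div_const (W (xU ∅) o)).log
    (div_ne_zero ho ho)).abs
  rw [div_self ho, Real.log_one, abs_zero] at hlog
  exact hlog.eventually_le_const one_pos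

lemma subsingleton_support_scaledBern {k : Fin K} (hk : ρ k = 0) (t : ℝ) :
    (Function.support (scaledBern ρ t k)).Subsingleton :=
  Set.subsingleton_of_subset_singleton (a := false) fun v hv ↦ by
    cases v <;> simp_all [scaledBern, bern]

variable [Fintype O]

lemma exists_tendsto_decodingErrorBound (hρ : ∀ k, ρ k ∈ Set.Icc (0 : ℝ) 1)
    (hW : ∀ x, IsDist (W x)) (hAC : ∀ k, AbsCont (W (xU {k})) (W (xU ∅))) {r : Fin K → ℝ}
    (hr : ∀ k, 0 ≤ r k) {B : Finset (Fin K)}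
    (hrB : ∀ k ∈ B, r k < ρ k * klDiv (W (xU {k})) (W (xU ∅))) :
    ∃ κ σ : Fin K → ℝ, (∀ k, 0 ≤ σ k) ∧ Tendsto (fun n : ℕ ↦ ∑ k ∈ B,
      (Real.exp (n * inputScale n * κ k) ^ σ k *
          missMoment (scaledBern ρ (inputScale n)) W k (likelihoodRatio W k) (σ k) ^ n +
        codeSize (r k) n * ((Real.exp (n * inputScale n * κ k))⁻¹ *
          falseAlarmMoment (scaledBern ρ (inputScale n)) W k (likelihoodRatio W k) ^ n)))
      atTop (𝓝 0) := by
  have huser (k : Fin K) : ∃ κ σ : ℝ, 0 ≤ σ ∧ (k ∈ B → Tendsto (fun n : ℕ ↦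
      Real.exp (n * inputScale n * κ) ^ σ *
          missMoment (scaledBern ρ (inputScale n)) W k (likelihoodRatio W k) σ ^ n +
        codeSize (r k) n * ((Real.exp (n * inputScale n * κ))⁻¹ *
          falseAlarmMoment (scaledBern ρ (inputScale n)) W k (likelihoodRatio W k) ^ n))
      atTop (𝓝 0)) := by
    by_cases hk : k ∈ B
    · obtain ⟨κ, hrκ, hκ⟩ := exists_between (hrB k hk)
      obtain ⟨σ, hσ, hmiss⟩ := exists_tendsto_missMoment_pow hρ hW (hAC k) hκ
      refine ⟨κ, σ, hσ.le, fun _ ↦ ?_⟩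
      simpa only [add_zero] using
        hmiss.add (tendsto_falseAlarmMoment_pow hρ hW (hAC k) (hr k) hrκ)
    · exact ⟨0, 0, le_rfl, fun h ↦ absurd h hk⟩
  choose κ σ hσ hlim using huser
  exact ⟨κ, σ, hσ, by simpa only [sum_const_zero] using tendsto_finsetSum B hlim⟩

lemma exists_tendsto_resolvabilityBound (hρ : ∀ k, ρ k ∈ Set.Icc (0 : ℝ) 1)
    (hW : ∀ x, IsDist (W x)) (hAC : ∀ x, AbsCont (W x) (W (xU ∅))) {A : Finset (Fin K)}
    {R : Fin K → ℝ} (hR : ∀ k ∈ A, ρ k * klDiv (W (xU {k})) (W (xU ∅)) < R k)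
    {N : ℕ → Fin K → ℝ} (hN : ∀ n k, Real.exp (n * inputScale n * R k) ≤ N n k) :
    ∃ s, 0 < s ∧ s ≤ 1 ∧ Tendsto (fun n : ℕ ↦ (n : ℝ) ^ 4 * (s⁻¹ * ∑ T ∈ A.powerset.erase ∅,
      (∏ k ∈ T, (N n k)⁻¹) ^ s * infoMoment (scaledBern ρ (inputScale n)) W T s ^ n))
      atTop (𝓝 0) := by
  obtain ⟨s, hs0, hs1, hs⟩ := exists_sum_mul_ratio_rpow_lt hW hAC hR
  have hterm (T : Finset (Fin K)) (hT : T ∈ A.powerset.erase ∅) :=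
    tendsto_pow_four_mul_infoMoment_pow hρ hW hAC (nonempty_iff_ne_empty.mpr (ne_of_mem_erase hT))
      hs0.le (fun k hk ↦ hs k (mem_powerset.mp (mem_of_mem_erase hT) hk)) hN
  refine ⟨s, hs0, hs1, ?_⟩
  simpa only [sum_const_zero, mul_zero, mul_sum, mul_left_comm s⁻¹] using
    (tendsto_finsetSum _ hterm).const_mul s⁻¹

end

variable {Y Z : Type*} [Fintype Y] [Fintype Z] {ρ : Fin K → ℝ} {Wy : (Fin K → Bool) → Y → ℝ}
  {Wz : (Fin K → Bool) → Z → ℝ}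

lemma exists_codes_tendsto (hWy : ∀ x, IsDist (Wy x)) (hWz : ∀ x, IsDist (Wz x))
    (hACz : ∀ x, AbsCont (Wz x) (Wz (xU ∅)))
    (hACy : ∀ U : Finset (Fin K), U.Nonempty → ∀ k ∈ U,
      AbsCont (Wy (xU U)) (Wy (xU {k})) ∧ AbsCont (Wy (xU {k})) (Wy (xU ∅)))
    (hρ : ∀ k, ρ k ∈ Set.Icc (0 : ℝ) 1) {rM rL : Fin K → ℝ} (hrM_nonneg : ∀ k, 0 ≤ rM k)
    (hrM : ∀ k, rM k ≠ 0 → rM k < ρ k * klDiv (Wy (xU {k})) (Wy (xU ∅)))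
    (hrML : ∀ k, ρ k ≠ 0 → ρ k * klDiv (Wz (xU {k})) (Wz (xU ∅)) < rM k + rL k) :
    ∃ (enc : ∀ n k, Fin (codeSize (rM k) n) × Fin (codeSize (rL k) n) → Fin n → Bool)
      (dec : ∀ n, (Fin n → Y) → (∀ k, Fin (codeSize (rL k) n)) → ∀ k, Fin (codeSize (rM k) n)),
      Tendsto (fun n ↦ Pe Wy (fun k ↦ codeSize (rM k) n) (fun k ↦ codeSize (rL k) n)
        (enc n) (dec n)) atTop (𝓝 0) ∧
      Tendsto (fun n : ℕ ↦ (n : ℝ) ^ 4 *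
        klDiv (Qhat Wz (fun k ↦ codeSize (rM k) n) (fun k ↦ codeSize (rL k) n) (enc n))
          (prodLaw fun _ ↦ outputLaw (scaledBern ρ (inputScale n)) Wz)) atTop (𝓝 0) := by
  obtain ⟨κ, σ, hσ, hdecoding⟩ := exists_tendsto_decodingErrorBound
    (B := univ.filter fun k ↦ rM k ≠ 0) hρ hWy
    (fun k ↦ (hACy {k} (singleton_nonempty k) k (mem_singleton_self k)).2) hrM_nonneg
    fun k hk ↦ hrM k (mem_filter.mp hk).2
  obtain ⟨s, hs0, hs1, hresolvability⟩ := exists_tendsto_resolvabilityBound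
    (A := univ.filter fun k ↦ ρ k ≠ 0) (R := fun k ↦ rM k + rL k)
    (N := fun n k ↦ (codeSize (rM k) n : ℝ) * codeSize (rL k) n) hρ hWz hACz
    (fun k hk ↦ hrML k (mem_filter.mp hk).2) fun n k ↦ by
      rw [mul_add, Real.exp_add]
      gcongr <;> exact exp_le_codeSize _ n
  have hbound := hdecoding.add hresolvability
  rw [add_zero] at hbound
  have hp (n : ℕ) := isDist_scaledBern hρ (inputScale_mem_Icc n)
  have hcode (n : ℕ) (hn : ∀ x, AbsCont (Wz x) (outputLaw (scaledBern ρ (inputScale n)) Wz)) :=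
    exists_code (n := n) (M := fun k ↦ codeSize (rM k) n) (L := fun k ↦ codeSize (rL k) n)
      (A := univ.filter fun k ↦ ρ k ≠ 0) (B := univ.filter fun k ↦ rM k ≠ 0) (w := (n : ℝ) ^ 4)
      (θ := fun k ↦ Real.exp (n * inputScale n * κ k)) (hp n) (fun x ↦ (hWy x).nonneg) hWz hn
      (likelihoodRatio_nonneg fun x ↦ (hWy x).nonneg)
      (fun _ _ _ ↦ eq_zero_of_likelihoodRatio_eq_zero hACy) (fun _ ↦ Real.exp_pos _) hσ
      (fun k hk ↦ by simp_all [codeSize_zero])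
      (fun k hk ↦ subsingleton_support_scaledBern (by simpa using hk) _) hs0 hs1 (by positivity)
  have hACn := tendsto_inputScale.eventually (eventually_absCont_outputLaw ρ hACz)
  obtain ⟨code, hPe, hKL⟩ := exists_tendsto_zero_of_eventually_add_le
    (E := fun n ↦ (∀ k, Fin (codeSize (rM k) n) × Fin (codeSize (rL k) n) → Fin n → Bool) ×
      ((Fin n → Y) → (∀ k, Fin (codeSize (rL k) n)) → ∀ k, Fin (codeSize (rM k) n)))
    (f := fun n c ↦ Pe Wy (fun k ↦ codeSize (rM k) n) (fun k ↦ codeSize (rL k) n) c.1 c.2)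
    (g := fun n c ↦ (n : ℝ) ^ 4 *
      klDiv (Qhat Wz (fun k ↦ codeSize (rM k) n) (fun k ↦ codeSize (rL k) n) c.1)
        (prodLaw fun _ ↦ outputLaw (scaledBern ρ (inputScale n)) Wz))
    (.of_forall fun n c ↦ Pe_nonneg (fun x ↦ (hWy x).nonneg) c.1 c.2)
    (hACn.mono fun n hn c ↦ mul_nonneg (by positivity) (klDiv_nonneg (isDist_Qhat hWz c.1)
      (isDist_prodLaw fun _ ↦ isDist_outputLaw (hp n) hWz) (absCont_Qhat hn c.1)))
    (hACn.mono fun n hn ↦ let ⟨enc, dec, hle⟩ := hcode n hn; ⟨(enc, dec), hle⟩) hbound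
  exact ⟨fun n ↦ (code n).1, fun n ↦ (code n).2, hPe, hKL⟩

end CodeSequences

section Covertness

variable {K : ℕ} {O : Type*} [Fintype O] {ρ : Fin K → ℝ} {W : (Fin K → Bool) → O → ℝ}

lemma tendsto_klDiv_outputLaw_div_sq (hρ : ∀ k, ρ k ∈ Set.Icc (0 : ℝ) 1)
    (hW : ∀ x, IsDist (W x)) (hAC : ∀ x, AbsCont (W x) (W (xU ∅))) :
    Tendsto (fun t ↦ klDiv (outputLaw (scaledBern ρ t) W) (W (xU ∅)) / t ^ 2) (𝓝[>] 0)
      (𝓝 (chiRho W ρ / 2)) := by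
  have hlim := tendsto_klDiv_div_sq (q := fun t ↦ outputLaw (scaledBern ρ t) W)
    (q' := fun o ↦ ∑ k, ρ k * (W (xU {k}) o - W (xU ∅) o))
    (mem_of_superset (Ioc_mem_nhdsGT one_pos) fun t ht ↦
      isDist_outputLaw (isDist_scaledBern hρ (Set.Ioc_subset_Icc_self ht)) hW)
    (outputLaw_scaledBern_zero (ρ := ρ) (W := W) ▸ hW _)
    (.of_forall fun t ↦ outputLaw_scaledBern_zero (ρ := ρ) (W := W) ▸ absCont_outputLaw hAC)
    hasDerivAt_outputLaw_scaledBern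
  simpa only [outputLaw_scaledBern_zero, chiRho] using hlim

lemma inv_natCast_mul_inputScale_sq_le {n : ℕ} (hn : 1 ≤ n) : (n * inputScale n ^ 2)⁻¹ ≤ n := by
  have hscale := inputScale_pos hn
  rw [inv_le_iff_one_le_mul₀ (by positivity), ← mul_assoc, ← pow_two, ← mul_pow]
  exact one_le_pow₀ (one_le_natCast_mul_inputScale hn)

lemma abs_sub_div_natCast_mul_inputScale_sq_le {n : ℕ} (hn : 1 ≤ n) {Δ D F : ℝ} (hF : 0 ≤ F)
    (hsub : |Δ - F - D| ≤ n * (2 * √F)) :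
    |(Δ - D) / (n * inputScale n ^ 2)| ≤ (n : ℝ) ^ 4 * F + 2 * √((n : ℝ) ^ 4 * F) := by
  have hn1 : (1 : ℝ) ≤ n := by exact_mod_cast hn
  have hnum : |Δ - D| ≤ F + n * (2 * √F) := by
    rw [abs_le] at hsub ⊢
    constructor <;> linarith
  have hden : 0 ≤ n * inputScale n ^ 2 := by positivity
  rw [abs_div, abs_of_nonneg hden, div_eq_inv_mul]
  calc (n * inputScale n ^ 2)⁻¹ * |Δ - D|
      ≤ n * (F + n * (2 * √F)) :=
        mul_le_mul (inv_natCast_mul_inputScale_sq_le hn) hnum (abs_nonneg _) n.cast_nonneg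
    _ = n * F + 2 * √((n : ℝ) ^ 4 * F) := by
        rw [Real.sqrt_mul (by positivity), show (n : ℝ) ^ 4 = (n ^ 2) ^ 2 by ring,
          Real.sqrt_sq (by positivity)]
        ring
    _ ≤ (n : ℝ) ^ 4 * F + 2 * √((n : ℝ) ^ 4 * F) := by
        gcongr
        exact le_self_pow₀ hn1 (by norm_num)

lemma tendsto_klDiv_div_natCast_mul_inputScale_sq (hρ : ∀ k, ρ k ∈ Set.Icc (0 : ℝ) 1)
    (hW : ∀ x, IsDist (W x)) (hAC : ∀ x, AbsCont (W x) (W (xU ∅)))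
    {P : ∀ n, (Fin n → O) → ℝ} (hP : ∀ n, IsDist (P n))
    (hPAC : ∀ᶠ n in atTop, AbsCont (P n)
      (prodLaw fun _ ↦ outputLaw (scaledBern ρ (inputScale n)) W))
    (hKL : Tendsto (fun n : ℕ ↦ (n : ℝ) ^ 4 * klDiv (P n)
      (prodLaw fun _ ↦ outputLaw (scaledBern ρ (inputScale n)) W)) atTop (𝓝 0)) :
    Tendsto (fun n : ℕ ↦ klDiv (P n) (prodLaw fun _ ↦ W (xU ∅)) / (n * inputScale n ^ 2)) atTop
      (𝓝 (chiRho W ρ / 2)) := by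
  let q (n : ℕ) : O → ℝ := outputLaw (scaledBern ρ (inputScale n)) W
  let F (n : ℕ) : ℝ := klDiv (P n) (prodLaw fun _ ↦ q n)
  have hq (n : ℕ) : IsDist (q n) :=
    isDist_outputLaw (isDist_scaledBern hρ (inputScale_mem_Icc n)) hW
  have hbound : Tendsto (fun n : ℕ ↦ (n : ℝ) ^ 4 * F n + 2 * √((n : ℝ) ^ 4 * F n)) atTop (𝓝 0) := by
    simpa using hKL.add (hKL.sqrt.const_mul 2)
  have herror : Tendsto (fun n : ℕ ↦ (klDiv (P n) (prodLaw fun _ ↦ W (xU ∅)) -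
      n * klDiv (q n) (W (xU ∅))) / (n * inputScale n ^ 2)) atTop (𝓝 0) := by
    refine squeeze_zero_norm' ?_ hbound
    filter_upwards [hPAC, tendsto_inputScale.eventually (eventually_abs_log_outputLaw_div_le ρ W),
      eventually_ge_atTop 1] with n hn hlog hn1
    have hsub := abs_klDiv_iid_sub_le (hP n) (hq n) hn (absCont_outputLaw hAC) hlog
    rw [mul_one] at hsub
    exact abs_sub_div_natCast_mul_inputScale_sq_le hn1
      (klDiv_nonneg (hP n) (isDist_prodLaw fun _ ↦ hq n) hn) hsub
  have hlim := herror.add ((tendsto_klDiv_outputLaw_div_sq hρ hW hAC).comp tendsto_inputScale)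
  rw [zero_add] at hlim
  refine hlim.congr' ?_
  filter_upwards [eventually_ge_atTop 1] with n hn
  have hn0 : (n : ℝ) ≠ 0 := by exact_mod_cast (Nat.one_le_iff_ne_zero.mp hn)
  rw [Function.comp_apply, sub_div, mul_div_mul_left _ _ hn0, sub_add_cancel]

lemma tendsto_zero_of_tendsto_div_natCast_mul_inputScale_sq {δ : ℕ → ℝ} {c : ℝ}
    (hδ : Tendsto (fun n : ℕ ↦ δ n / (n * inputScale n ^ 2)) atTop (𝓝 c)) :
    Tendsto δ atTop (𝓝 0) := by
  have hlim := hδ.mul tendsto_natCast_mul_inputScale_sq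
  rw [mul_zero] at hlim
  refine hlim.congr' ?_
  filter_upwards [eventually_ge_atTop 1] with n hn
  have hscale := inputScale_pos hn
  exact div_mul_cancel₀ _ (by positivity)

lemma tendsto_div_sqrt_natCast_mul {δ ℓ : ℕ → ℝ} {χ r : ℝ} (hχ : 0 < χ)
    (hδ : Tendsto (fun n : ℕ ↦ δ n / (n * inputScale n ^ 2)) atTop (𝓝 (χ / 2)))
    (hℓ : Tendsto (fun n : ℕ ↦ ℓ n / (n * inputScale n)) atTop (𝓝 r)) :
    Tendsto (fun n : ℕ ↦ ℓ n / √(n * δ n)) atTop (𝓝 (√(2 / χ) * r)) := by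
  have hlim := hℓ.div hδ.sqrt (Real.sqrt_ne_zero'.mpr (half_pos hχ))
  rw [div_eq_inv_mul r, ← Real.sqrt_inv, inv_div] at hlim
  refine hlim.congr' ?_
  filter_upwards [eventually_ge_atTop 1] with n hn
  have hscale := inputScale_pos hn
  have hδ_eq : n * δ n = (n * inputScale n) ^ 2 * (δ n / (n * inputScale n ^ 2)) := by
    field_simp
  rw [hδ_eq, Real.sqrt_mul (by positivity), Real.sqrt_sq (by positivity), Pi.div_apply, div_div]

end Covertness

section Achievability

variable {K : ℕ}

lemma absCont_of_forall_nonempty {O : Type*} {W : (Fin K → Bool) → O → ℝ}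
    (hAC : ∀ U : Finset (Fin K), U.Nonempty → AbsCont (W (xU U)) (W (xU ∅)))
    (x : Fin K → Bool) : AbsCont (W x) (W (xU ∅)) := by
  rw [← xU_filter x]
  rcases (univ.filter fun k ↦ x k = true).eq_empty_or_nonempty with hempty | hne
  · rw [hempty]
    exact fun _ ↦ id
  · exact hAC _ hne

lemma chiRho_pos {Z : Type*} [Fintype Z] {Wz : (Fin K → Bool) → Z → ℝ}
    (hWz : ∀ x z, 0 ≤ Wz x z) (hAC : ∀ k, AbsCont (Wz (xU {k})) (Wz (xU ∅))) {ρ : Fin K → ℝ}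
    (hρ1 : ∑ k, ρ k = 1) (hmix : (fun z ↦ ∑ k, ρ k * Wz (xU {k}) z) ≠ Wz (xU ∅)) :
    0 < chiRho Wz ρ := by
  obtain ⟨z, hz⟩ := Function.ne_iff.mp hmix
  have hz0 : Wz (xU ∅) z ≠ 0 := fun h ↦ hz (by simp [h, hAC _ z h])
  have hdiff : ∑ k, ρ k * (Wz (xU {k}) z - Wz (xU ∅) z) ≠ 0 := by
    simpa only [mul_sub, sum_sub_distrib, ← sum_mul, hρ1, one_mul, sub_ne_zero] using hz
  have hpos := (hWz (xU ∅) z).lt_of_ne' hz0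
  exact sum_pos' (fun z _ ↦ div_nonneg (sq_nonneg _) (hWz _ z)) ⟨z, mem_univ z, by positivity⟩

lemma mixture_ne_of_not_exists_convexCombination {Z : Type*} {Q : Finset (Fin K) → Z → ℝ}
    {Q₀ : Z → ℝ}
    (hNC : ¬ ∃ lam : Finset (Fin K) → ℝ, (∀ T, 0 ≤ lam T) ∧ lam ∅ = 0 ∧ ∑ T, lam T = 1 ∧
      ∀ z, Q₀ z = ∑ T, lam T * Q T z)
    {ρ : Fin K → ℝ} (hρ : ∀ k, 0 ≤ ρ k) (hρ1 : ∑ k, ρ k = 1) :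
    (fun z ↦ ∑ k, ρ k * Q {k} z) ≠ Q₀ := by
  rintro rfl
  have hsum (g : Finset (Fin K) → ℝ) :
      ∑ T, (∑ k, if T = {k} then ρ k else 0) * g T = ∑ k, ρ k * g {k} := by
    simp only [sum_mul, ite_mul, zero_mul]
    rw [Finset.sum_comm]
    simp only [sum_ite_eq', mem_univ, if_true]
  refine hNC ⟨fun T ↦ ∑ k, if T = {k} then ρ k else 0, fun T ↦ sum_nonneg fun k _ ↦ ?_, ?_, ?_,
    fun z ↦ (hsum fun T ↦ Q T z).symm⟩
  · split_ifs
    exacts [hρ k, le_rfl]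
  · exact sum_eq_zero fun k _ ↦ if_neg (singleton_ne_empty k).symm
  · simpa [hρ1] using hsum fun _ ↦ 1

variable {Y Z : Type*} [Fintype Y] [Fintype Z] {ρ : Fin K → ℝ} {Wy : (Fin K → Bool) → Y → ℝ}
  {Wz : (Fin K → Bool) → Z → ℝ}

lemma exists_codes_of_rates (hWy : ∀ x, IsDist (Wy x)) (hWz : ∀ x, IsDist (Wz x))
    (hACz : ∀ U : Finset (Fin K), U.Nonempty → AbsCont (Wz (xU U)) (Wz (xU ∅)))
    (hACy : ∀ U : Finset (Fin K), U.Nonempty → ∀ k ∈ U,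
      AbsCont (Wy (xU U)) (Wy (xU {k})) ∧ AbsCont (Wy (xU {k})) (Wy (xU ∅)))
    (hρ : ∀ k, ρ k ∈ Set.Icc (0 : ℝ) 1) (hχ : 0 < chiRho Wz ρ) {rM rL : Fin K → ℝ}
    (hrM_nonneg : ∀ k, 0 ≤ rM k) (hrL_nonneg : ∀ k, 0 ≤ rL k)
    (hrM : ∀ k, rM k ≠ 0 → rM k < ρ k * klDiv (Wy (xU {k})) (Wy (xU ∅)))
    (hrML : ∀ k, ρ k ≠ 0 → ρ k * klDiv (Wz (xU {k})) (Wz (xU ∅)) < rM k + rL k) :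
    ∃ (M L : ℕ → Fin K → ℕ)
      (enc : ∀ n (k : Fin K), Fin (M n k) × Fin (L n k) → Fin n → Bool)
      (dec : ∀ n, (Fin n → Y) → (∀ k, Fin (L n k)) → ∀ k, Fin (M n k)),
      (∀ n k, 0 < M n k) ∧ (∀ n k, 0 < L n k) ∧
      Tendsto (fun n ↦ Pe Wy (M n) (L n) (enc n) (dec n)) atTop (𝓝 0) ∧
      Tendsto (fun n ↦ deltaN Wz (M n) (L n) (enc n)) atTop (𝓝 0) ∧
      (∀ k, Tendsto (fun n ↦ Real.log (M n k) / √(n * deltaN Wz (M n) (L n) (enc n))) atTop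
        (𝓝 (√(2 / chiRho Wz ρ) * rM k))) ∧
      ∀ k, Tendsto (fun n ↦ Real.log (L n k) / √(n * deltaN Wz (M n) (L n) (enc n))) atTop
        (𝓝 (√(2 / chiRho Wz ρ) * rL k)) := by
  have hAC := absCont_of_forall_nonempty hACz
  obtain ⟨enc, dec, hPe, hKL⟩ := exists_codes_tendsto hWy hWz hAC hACy hρ hrM_nonneg hrM hrML
  have hδ : Tendsto (fun n : ℕ ↦ deltaN Wz (fun k ↦ codeSize (rM k) n)
      (fun k ↦ codeSize (rL k) n) (enc n) / (n * inputScale n ^ 2)) atTop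
      (𝓝 (chiRho Wz ρ / 2)) :=
    tendsto_klDiv_div_natCast_mul_inputScale_sq hρ hWz hAC (fun n ↦ isDist_Qhat hWz (enc n))
      ((tendsto_inputScale.eventually (eventually_absCont_outputLaw ρ hAC)).mono
        fun n hn ↦ absCont_Qhat hn (enc n)) hKL
  exact ⟨fun n k ↦ codeSize (rM k) n, fun n k ↦ codeSize (rL k) n, enc, dec,
    fun n k ↦ NeZero.pos _, fun n k ↦ NeZero.pos _, hPe,
    tendsto_zero_of_tendsto_div_natCast_mul_inputScale_sq hδ,
    fun k ↦ tendsto_div_sqrt_natCast_mul hχ hδ (tendsto_log_codeSize_div (hrM_nonneg k)),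
    fun k ↦ tendsto_div_sqrt_natCast_mul hχ hδ (tendsto_log_codeSize_div (hrL_nonneg k))⟩

end Achievability

section Rates

lemma mul_lt_rate_sum {a d r μ : ℝ} (hμ : 0 < μ) (hμ1 : μ < 1) (hr : 0 < r) (ha : 0 ≤ a)
    (hd : 0 ≤ d) (had : ¬(d = 0 ∧ a = 0)) :
    r * d < (1 - μ) * (r * a) + r * max ((1 + μ) * d - (1 - μ) * a) 0 := by
  suffices h : d < (1 - μ) * a + max ((1 + μ) * d - (1 - μ) * a) 0 by
    calc r * d < r * ((1 - μ) * a + max ((1 + μ) * d - (1 - μ) * a) 0) := by gcongr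
      _ = _ := by ring
  rcases hd.eq_or_lt with rfl | hd
  · have ha : 0 < a := ha.lt_of_ne' fun h ↦ had ⟨rfl, h⟩
    exact add_pos_of_pos_of_nonneg (mul_pos (sub_pos.mpr hμ1) ha) (le_max_right _ _)
  · linarith [le_max_left ((1 + μ) * d - (1 - μ) * a) 0, mul_pos hμ hd]

variable {K : ℕ} {Z : Type*} [Fintype Z] {Wz : (Fin K → Bool) → Z → ℝ}

lemma exists_weights_silencing (ρ : Fin K → ℝ) (hρ : ∀ k, ρ k ∈ Set.Icc (0 : ℝ) 1)
    {p : Fin K → Prop} (hp : ∀ k, p k → Wz (xU {k}) = Wz (xU ∅)) :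
    ∃ ρ' : Fin K → ℝ, (∀ k, ρ' k ∈ Set.Icc (0 : ℝ) 1) ∧ chiRho Wz ρ' = chiRho Wz ρ ∧
      (∀ k, ρ' k ≠ 0 → ¬p k) ∧ ∀ k, ¬p k → ρ' k = ρ k := by
  refine ⟨fun k ↦ if p k then 0 else ρ k, fun k ↦ ?_, ?_, fun k ↦ ?_, fun k hk ↦ if_neg hk⟩
  · dsimp only
    split_ifs
    exacts [⟨le_rfl, zero_le_one⟩, hρ k]
  · unfold chiRho
    refine sum_congr rfl fun z _ ↦ congrArg (· ^ 2 / _) (sum_congr rfl fun k _ ↦ ?_)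
    dsimp only
    split_ifs with hk
    · rw [hp k hk, sub_self, mul_zero, mul_zero]
    · rfl
  · exact fun hk h ↦ hk (if_pos h)

end Rates

theorem covert_achievability_general {K : ℕ} {Y Z : Type*} [Fintype Y] [Fintype Z]
    (Wy : (Fin K → Bool) → Y → ℝ) (Wz : (Fin K → Bool) → Z → ℝ)
    (hWy : ∀ x, IsDist (Wy x)) (hWz : ∀ x, IsDist (Wz x))
    (hACz : ∀ U : Finset (Fin K), U.Nonempty → AbsCont (Wz (xU U)) (Wz (xU ∅)))
    (hACy : ∀ U : Finset (Fin K), U.Nonempty → ∀ k ∈ U,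
      AbsCont (Wy (xU U)) (Wy (xU {k})) ∧ AbsCont (Wy (xU {k})) (Wy (xU ∅)))
    (ρ : Fin K → ℝ) (hρ : ∀ k, ρ k ∈ Set.Icc (0 : ℝ) 1) (hχ : 0 < chiRho Wz ρ)
    (μ : ℝ) (hμ : μ ∈ Set.Ioo (0 : ℝ) 1) :
    ∃ (M L : ℕ → Fin K → ℕ)
      (enc : ∀ n (k : Fin K), Fin (M n k) × Fin (L n k) → Fin n → Bool)
      (dec : ∀ n, (Fin n → Y) → (∀ k, Fin (L n k)) → ∀ k, Fin (M n k)),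
      (∀ n k, 0 < M n k) ∧ (∀ n k, 0 < L n k) ∧
      Tendsto (fun n ↦ Pe Wy (M n) (L n) (enc n) (dec n)) atTop (𝓝 0) ∧
      Tendsto (fun n ↦ deltaN Wz (M n) (L n) (enc n)) atTop (𝓝 0) ∧
      (∀ k, Tendsto (fun n ↦ Real.log (M n k) / √(n * deltaN Wz (M n) (L n) (enc n))) atTop
        (𝓝 ((1 - μ) * √(2 / chiRho Wz ρ) * (ρ k * klDiv (Wy (xU {k})) (Wy (xU ∅)))))) ∧
      (∀ k, Tendsto (fun n ↦ Real.log (L n k) / √(n * deltaN Wz (M n) (L n) (enc n))) atTop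
        (𝓝 (√(2 / chiRho Wz ρ) * ρ k * max ((1 + μ) * klDiv (Wz (xU {k})) (Wz (xU ∅)) -
          (1 - μ) * klDiv (Wy (xU {k})) (Wy (xU ∅))) 0))) := by
  have hne (k : Fin K) : ({k} : Finset (Fin K)).Nonempty := singleton_nonempty k
  have ha (k : Fin K) : 0 ≤ klDiv (Wy (xU {k})) (Wy (xU ∅)) :=
    klDiv_nonneg (hWy _) (hWy _) (hACy _ (hne k) k (mem_singleton_self k)).2
  have hd (k : Fin K) : 0 ≤ klDiv (Wz (xU {k})) (Wz (xU ∅)) :=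
    klDiv_nonneg (hWz _) (hWz _) (hACz _ (hne k))
  -- A user who affects neither output has rate zero, so silencing that user costs nothing.
  obtain ⟨ρ', hρ', hχ', hactive, hρ'_eq⟩ := exists_weights_silencing ρ hρ
    (p := fun k ↦ klDiv (Wz (xU {k})) (Wz (xU ∅)) = 0 ∧ klDiv (Wy (xU {k})) (Wy (xU ∅)) = 0)
    fun k hk ↦ by_contra fun hQ ↦ (klDiv_pos (hWz _) (hWz _) (hACz _ (hne k)) hQ).ne' hk.1
  obtain ⟨M, L, enc, dec, hM, hL, hPe, hδ, hlogM, hlogL⟩ :=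
    exists_codes_of_rates hWy hWz hACz hACy hρ' (hχ' ▸ hχ)
      (rM := fun k ↦ (1 - μ) * (ρ k * klDiv (Wy (xU {k})) (Wy (xU ∅))))
      (rL := fun k ↦ ρ k * max ((1 + μ) * klDiv (Wz (xU {k})) (Wz (xU ∅)) -
        (1 - μ) * klDiv (Wy (xU {k})) (Wy (xU ∅))) 0)
      (fun k ↦ mul_nonneg (sub_pos.mpr hμ.2).le (mul_nonneg (hρ k).1 (ha k)))
      (fun k ↦ mul_nonneg (hρ k).1 (le_max_right _ _))
      (fun k hk ↦ by
        have hk := right_ne_zero_of_mul hk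
        rw [hρ'_eq k fun h ↦ right_ne_zero_of_mul hk h.2]
        exact mul_lt_of_lt_one_left ((mul_nonneg (hρ k).1 (ha k)).lt_of_ne' hk)
          (sub_lt_self 1 hμ.1))
      fun k hk ↦ by
        have hvisible := hactive k hk
        rw [hρ'_eq k hvisible] at hk ⊢
        exact mul_lt_rate_sum hμ.1 hμ.2 ((hρ k).1.lt_of_ne' hk) (ha k) (hd k) hvisible
  simp only [hχ'] at hlogM hlogL
  refine ⟨M, L, enc, dec, hM, hL, hPe, hδ, fun k ↦ ?_, fun k ↦ ?_⟩
  · rw [mul_comm (1 - μ), mul_assoc]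
    exact hlogM k
  · rw [mul_assoc]
    exact hlogL k

/-- achievability: for every `ρ` in the simplex, every `αₙ ∈ (0,1)` with
`n αₙ → ∞` and `n αₙ² → 0`, and every `μ ∈ (0,1)`, there exists a sequence of codes which is
reliable, covert, and attains the prescribed message and key throughputs. -/
theorem covert_achievability (K : ℕ) (hK : 2 ≤ K)
    {Y Z : Type} [Fintype Y] [Fintype Z]
    (Wy : (Fin K → Bool) → Y → ℝ) (Wz : (Fin K → Bool) → Z → ℝ)
    (hWy : ∀ x, IsDist (Wy x)) (hWz : ∀ x, IsDist (Wz x))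
    (hACz : ∀ U : Finset (Fin K), U.Nonempty → AbsCont (Wz (xU U)) (Wz (xU ∅)))
    (hNC : ¬ ∃ lam : Finset (Fin K) → ℝ, (∀ T, 0 ≤ lam T) ∧ lam ∅ = 0 ∧
      (∑ T : Finset (Fin K), lam T) = 1 ∧
      ∀ z, Wz (xU (∅ : Finset (Fin K))) z = ∑ T : Finset (Fin K), lam T * Wz (xU T) z)
    (hACy : ∀ U : Finset (Fin K), U.Nonempty → ∀ k ∈ U,
      AbsCont (Wy (xU U)) (Wy (xU {k})) ∧ AbsCont (Wy (xU {k})) (Wy (xU ∅)))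
    (ρ : Fin K → ℝ) (hρ : ∀ k, ρ k ∈ Set.Icc (0 : ℝ) 1) (hρ1 : ∑ k, ρ k = 1)
    (α : ℕ → ℝ) (hα : ∀ n, α n ∈ Set.Ioo (0 : ℝ) 1)
    (hnα : Tendsto (fun n : ℕ => (n : ℝ) * α n) atTop atTop)
    (hnα2 : Tendsto (fun n : ℕ => (n : ℝ) * (α n) ^ 2) atTop (𝓝 0))
    (μ : ℝ) (hμ : μ ∈ Set.Ioo (0 : ℝ) 1) :
    ∃ (M L : ℕ → Fin K → ℕ)
      (enc : ∀ n (k : Fin K), Fin (M n k) × Fin (L n k) → Fin n → Bool)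
      (dec : ∀ n, (Fin n → Y) → (∀ k, Fin (L n k)) → ∀ k, Fin (M n k)),
      (∀ n k, 0 < M n k) ∧ (∀ n k, 0 < L n k) ∧
      Tendsto (fun n => Pe Wy (M n) (L n) (enc n) (dec n)) atTop (𝓝 0) ∧
      Tendsto (fun n => deltaN Wz (M n) (L n) (enc n)) atTop (𝓝 0) ∧
      (∀ k, Tendsto (fun n => Real.log (M n k : ℝ) /
          Real.sqrt ((n : ℝ) * deltaN Wz (M n) (L n) (enc n))) atTop
        (𝓝 ((1 - μ) * Real.sqrt (2 / chiRho Wz ρ) *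
          (ρ k * klDiv (Wy (xU {k})) (Wy (xU ∅)))))) ∧
      (∀ k, Tendsto (fun n => Real.log (L n k : ℝ) /
          Real.sqrt ((n : ℝ) * deltaN Wz (M n) (L n) (enc n))) atTop
        (𝓝 (Real.sqrt (2 / chiRho Wz ρ) * ρ k *
          max ((1 + μ) * klDiv (Wz (xU {k})) (Wz (xU ∅)) -
            (1 - μ) * klDiv (Wy (xU {k})) (Wy (xU ∅))) 0))) :=
  covert_achievability_general Wy Wz hWy hWz hACz hACy ρ hρ
    (chiRho_pos (fun x ↦ (hWz x).nonneg) (fun k ↦ hACz _ (singleton_nonempty k)) hρ1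
      (mixture_ne_of_not_exists_convexCombination hNC (fun k ↦ (hρ k).1) hρ1)) μ hμ
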